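/- arXiv:1901.06334 — 2 statements merged into one kernel-verified Lean document; each statement's English description precedes it below -/
import Mathlib

section
/- For every Borel set A ⊆ (−1,1), the finite Hilbert transform of its characteristic function satisfies ‖T(χ_A)‖_{L^2} ≥ β · |A|^{1/2}, where β := ( ∫_0^∞ 4λ/(e^{πλ}+1) dλ )^{1/2} and |A| denotes the Lebesgue measure of A. -/
open MeasureTheory Filter Set

/-- Lebesgue measure restricted to the interval (-1,1). -/
noncomputable def volIoo : Measure ℝ := volume.restrict (Ioo (-1:ℝ) 1)

/-- The finite Hilbert transform of `f`, defined at `t` as the principal value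
`lim_{ε→0⁺} (1/π)(∫_{-1}^{t-ε} + ∫_{t+ε}^{1}) f(x)/(x−t) dx`. -/
noncomputable def fht (f : ℝ → ℂ) (t : ℝ) : ℂ :=
  limUnder (nhdsWithin (0:ℝ) (Ioi 0)) (fun ε : ℝ =>
    (Real.pi : ℂ)⁻¹ * ((∫ x in Ioo (-1:ℝ) (t - ε), f x / ((x : ℂ) - (t : ℂ))) +
      ∫ x in Ioo (t + ε) (1:ℝ), f x / ((x : ℂ) - (t : ℂ))))

/-- The constant `β = (∫_0^∞ 4λ/(e^{πλ}+1) dλ)^{1/2}`. -/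
noncomputable def fhtBeta : ℝ :=
  Real.sqrt (∫ l in Ioi (0:ℝ), 4 * l / (Real.exp (Real.pi * l) + 1))

section Aux
open Topology


lemma beta_term (r : ℝ) (hr : 0 < r) : IntegrableOn (fun x : ℝ => x * Real.exp (-(r * x))) (Ioi 0) ∧
   ∫ x in Ioi (0:ℝ), x * Real.exp (-(r * x)) = 1 / r^2 := by
  have h := Real.integral_rpow_mul_exp_neg_mul_Ioi (a := 2) (r := r) (by norm_num) hr
  have h2 : ∫ x in Ioi (0:ℝ), x * Real.exp (-(r * x)) = 1 / r^2 := by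
    norm_num at h
    rw [h, one_div]
  refine ⟨?_, h2⟩
  by_contra hc
  rw [IntegrableOn] at hc
  rw [integral_undef hc] at h2
  have : (0:ℝ) < 1 / r^2 := by positivity
  linarith

lemma beta_alt : HasSum (fun n : ℕ => (-1:ℝ)^n * (1 / ((n:ℝ)+1)^2)) (Real.pi^2/12) := by
  have hS : HasSum (fun n : ℕ => 1 / ((n:ℝ)+1)^2) (Real.pi^2/6) := by
    have := (hasSum_nat_add_iff' (f := fun n : ℕ => 1 / (n:ℝ)^2) 1).2 hasSum_zeta_two
    simpa using this
  have hodd : HasSum (fun k : ℕ => 1 / (((2*k+1 : ℕ):ℝ)+1)^2) (Real.pi^2/24) := by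
    have := hS.mul_left (1/4)
    have e2 : (fun k : ℕ => 1 / (((2*k+1 : ℕ):ℝ)+1)^2) = fun k : ℕ => 1/4 * (1 / ((k:ℝ)+1)^2) := by
      ext k
      have : ((2*k+1 : ℕ):ℝ)+1 = 2 * ((k:ℝ)+1) := by push_cast; ring
      rw [this, mul_pow]
      field_simp
      norm_num
    rw [e2]
    have e3 : Real.pi^2/24 = 1/4 * (Real.pi^2/6) := by ring
    rw [e3]
    exact this
  have hsummE : Summable (fun k : ℕ => 1 / (((2*k : ℕ):ℝ)+1)^2) :=
    hS.summable.comp_injective (i := fun k : ℕ => 2*k) (fun a b h => by simpa using h)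
  obtain ⟨e, he⟩ := hsummE
  have h1 := HasSum.even_add_odd (f := fun n : ℕ => 1 / ((n:ℝ)+1)^2) he hodd
  have h2 := h1.unique hS
  have h3 := HasSum.even_add_odd (f := fun n : ℕ => (-1:ℝ)^n * (1 / ((n:ℝ)+1)^2)) 
    (m := e) (m' := -(Real.pi^2/24)) (by simpa using he) (by simpa [pow_succ] using hodd.neg)
  convert h3 using 1
  linarith

lemma beta_int : ∫ l in Ioi (0:ℝ), 4 * l / (Real.exp (Real.pi * l) + 1) = 1/3 := by
  have hp := Real.pi_pos
  have hF : ∀ n : ℕ, Integrable (fun l : ℝ => (-1:ℝ)^n * (4 * (l * Real.exp (-((((n:ℝ)+1)*Real.pi) * l)))))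
      (volume.restrict (Ioi 0)) := fun n => 
    (((beta_term (((n:ℝ)+1)*Real.pi) (by positivity)).1).const_mul _).const_mul _
  have hn : ∀ n : ℕ, ∫ l in Ioi (0:ℝ), ‖(-1:ℝ)^n * (4 * (l * Real.exp (-((((n:ℝ)+1)*Real.pi) * l))))‖
      = 4/Real.pi^2 * (1 / ((n:ℝ)+1)^2) := by
    intro n
    have : ∀ l ∈ Ioi (0:ℝ), ‖(-1:ℝ)^n * (4 * (l * Real.exp (-((((n:ℝ)+1)*Real.pi) * l))))‖
      = 4 * (l * Real.exp (-((((n:ℝ)+1)*Real.pi) * l))) := by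
      intro l hl
      have : 0 < l := hl
      rw [norm_mul, norm_pow, norm_neg, norm_one, one_pow, one_mul, Real.norm_of_nonneg (by positivity)]
    rw [setIntegral_congr_fun measurableSet_Ioi this, integral_const_mul, 
      (beta_term (((n:ℝ)+1)*Real.pi) (by positivity)).2]
    field_simp
  have hS : Summable (fun n : ℕ => 1 / ((n:ℝ)+1)^2) := by
    have := (summable_nat_add_iff 1).2 hasSum_zeta_two.summable
    simpa using this
  have key := hasSum_integral_of_summable_integral_norm hF (by simp_rw [hn]; exact hS.mul_left _)
  have e1 : ∀ n : ℕ, ∫ l in Ioi (0:ℝ), (-1:ℝ)^n * (4 * (l * Real.exp (-((((n:ℝ)+1)*Real.pi) * l))))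
      = 4/Real.pi^2 * ((-1:ℝ)^n * (1 / ((n:ℝ)+1)^2)) := by
    intro n
    rw [integral_const_mul, integral_const_mul, (beta_term (((n:ℝ)+1)*Real.pi) (by positivity)).2]
    field_simp
  simp_rw [e1] at key
  have h2 := key.unique (beta_alt.mul_left (4/Real.pi^2))
  have e2 : ∀ l ∈ Ioi (0:ℝ), 4 * l / (Real.exp (Real.pi * l) + 1) = 
     ∑' n : ℕ, (-1:ℝ)^n * (4 * (l * Real.exp (-((((n:ℝ)+1)*Real.pi) * l)))) := by
    intro l hl
    have hl : 0 < l := hl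
    have hlt : Real.exp (-(Real.pi * l)) < 1 := by
      rw [Real.exp_lt_one_iff]; have := mul_pos hp hl; linarith
    have hg := (hasSum_geometric_of_abs_lt_one (r := -Real.exp (-(Real.pi * l))) 
      (by rw [abs_neg, abs_of_pos (Real.exp_pos _)]; exact hlt)).mul_left (4 * l * Real.exp (-(Real.pi * l)))
    have : (fun n : ℕ => (-1:ℝ)^n * (4 * (l * Real.exp (-((((n:ℝ)+1)*Real.pi) * l))))) = 
      fun n : ℕ => (4 * l * Real.exp (-(Real.pi * l))) * (-Real.exp (-(Real.pi * l)))^n := by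
      ext n
      have : -((((n:ℝ)+1)*Real.pi) * l) = (n:ℝ) * (-(Real.pi * l)) + (-(Real.pi * l)) := by ring
      rw [this, Real.exp_add, Real.exp_nat_mul, neg_pow (Real.exp _)]
      ring
    rw [this, hg.tsum_eq, Real.exp_neg]
    have := Real.exp_pos (Real.pi * l)
    generalize Real.exp (Real.pi * l) = E at *
    have h1 : (1 - -E⁻¹) = (E + 1) / E := by field_simp; ring
    rw [h1]
    field_simp
  rw [setIntegral_congr_fun measurableSet_Ioi e2, h2]
  field_simp
  norm_num


lemma contour_zero (G : ℂ → ℂ) (U : Set ℂ) (hU : ∀ w : ℂ, 0 ≤ w.im → w ∈ U)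
    (hG : DifferentiableOn ℂ G U) (B R0 : ℝ)
    (hB : ∀ w : ℂ, 0 ≤ w.im → R0 ≤ ‖w‖ → ‖G w‖ ≤ B / ‖w‖^2)
    (hInt0 : Integrable (fun t : ℝ => G t)) : ∫ t : ℝ, G t = 0 := by
  have h1 : Tendsto (fun R : ℝ => ∫ t in (-R)..R, G t) atTop (𝓝 (∫ t : ℝ, G t)) :=
    intervalIntegral_tendsto_integral hInt0 tendsto_neg_atTop_atBot tendsto_id
  refine tendsto_nhds_unique h1 ?_
  have h2 : ∀ᶠ R : ℝ in atTop, ‖∫ t in (-R)..R, G t‖ ≤ 4 * B / R := by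
    filter_upwards [eventually_ge_atTop R0, eventually_gt_atTop 0] with R hR hR0
    have hc := Complex.integral_boundary_rect_eq_zero_of_differentiableOn G (-(R:ℂ)) ((R:ℂ) + R * Complex.I)
      (hG.mono (by
        intro w hw
        apply hU
        have := hw.2
        simp [uIcc_of_le hR0.le] at this
        exact this.1))
    simp at hc
    have bd : ∀ w : ℂ, 0 ≤ w.im → R ≤ ‖w‖ → ‖G w‖ ≤ B / R^2 := by
      intro w hw hw2
      have h3 := hB w hw (hR.trans hw2)
      have hw3 : 0 < ‖w‖ := hR0.trans_le hw2
      have hB0 : 0 ≤ B := by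
        by_contra hn
        have : B / ‖w‖^2 < 0 := div_neg_of_neg_of_pos (by linarith) (by positivity)
        have := norm_nonneg (G w)
        linarith
      refine h3.trans ?_
      gcongr
    have b1 : ‖∫ (x : ℝ) in -R..R, G (↑x + ↑R * Complex.I)‖ ≤ B / R^2 * |R - (-R)| := by
      apply intervalIntegral.norm_integral_le_of_norm_le_const
      intro x _
      apply bd
      · simp [hR0.le]
      · have := Complex.abs_im_le_norm (↑x + ↑R * Complex.I)
        simp at this
        exact (le_abs_self R).trans this
    have b2 : ‖∫ (y : ℝ) in (0:ℝ)..R, G (↑R + ↑y * Complex.I)‖ ≤ B / R^2 * |R - 0| := by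
      apply intervalIntegral.norm_integral_le_of_norm_le_const
      intro x hx
      rw [uIoc_of_le hR0.le] at hx
      apply bd
      · simp [hx.1.le]
      · have := Complex.abs_re_le_norm (↑R + ↑x * Complex.I)
        simp at this
        exact (le_abs_self R).trans this
    have b3 : ‖∫ (y : ℝ) in (0:ℝ)..R, G (-↑R + ↑y * Complex.I)‖ ≤ B / R^2 * |R - 0| := by
      apply intervalIntegral.norm_integral_le_of_norm_le_const
      intro x hx
      rw [uIoc_of_le hR0.le] at hx
      apply bd
      · simp [hx.1.le]
      · have := Complex.abs_re_le_norm (-↑R + ↑x * Complex.I)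
        simp at this
        exact (le_abs_self R).trans this
    have hc2 : (∫ t in (-R)..R, G t) = (∫ (x : ℝ) in -R..R, G (↑x + ↑R * Complex.I)) - 
       Complex.I * (∫ (y : ℝ) in (0:ℝ)..R, G (↑R + ↑y * Complex.I)) + 
       Complex.I * ∫ (y : ℝ) in (0:ℝ)..R, G (-↑R + ↑y * Complex.I) := by
      linear_combination hc
    rw [hc2]
    refine (norm_add_le _ _).trans ?_
    refine (add_le_add_left (norm_sub_le _ _) _).trans ?_
    rw [norm_mul, norm_mul, Complex.norm_I, one_mul, one_mul]
    have e : B / R^2 * |R - (-R)| + B / R^2 * |R - 0| + B / R^2 * |R - 0| = 4 * B / R := by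
      rw [abs_of_pos (by linarith), sub_zero, abs_of_pos hR0]
      field_simp; ring
    linarith
  rw [tendsto_zero_iff_norm_tendsto_zero]
  refine squeeze_zero' (Eventually.of_forall fun _ => norm_nonneg _) h2 ?_
  exact tendsto_const_nhds.div_atTop tendsto_id

lemma poisson_int (a s : ℝ) (hs : 0 < s) : Integrable (fun t : ℝ => s / ((t - a)^2 + s^2)) ∧
    ∫ t : ℝ, s / ((t - a)^2 + s^2) = Real.pi := by
  have e : (fun t : ℝ => s / ((t - a)^2 + s^2)) = fun t => s⁻¹ * (1 + ((t - a)/s)^2)⁻¹ := by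
    ext t
    field_simp
    ring
  have i1 : Integrable (fun t : ℝ => (1 + (t/s)^2)⁻¹) := 
    integrable_inv_one_add_sq.comp_div hs.ne'
  rw [e]
  refine ⟨(i1.comp_sub_right a).const_mul _, ?_⟩
  rw [integral_const_mul, integral_sub_right_eq_self (fun t : ℝ => (1 + (t/s)^2)⁻¹) a,
    Measure.integral_comp_div (fun t : ℝ => (1 + t^2)⁻¹) s, integral_univ_inv_one_add_sq, abs_of_pos hs]
  simp [hs.ne']


lemma decay_bound (p w : ℂ) (hw : 2 * ‖p‖ + 1 ≤ ‖w‖) : ‖w‖ / 2 ≤ ‖w - p‖ := by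
  have := norm_sub_norm_le w p
  linarith [norm_nonneg p]

lemma poisson_G (G : ℂ → ℂ) (U : Set ℂ) (hUo : IsOpen U) (hU : ∀ w : ℂ, 0 ≤ w.im → w ∈ U)
    (hG : DifferentiableOn ℂ G U) (B : ℝ)
    (hB : ∀ w : ℂ, 0 ≤ w.im → ‖G w‖ ≤ B / (1 + ‖w‖)) (a s : ℝ) (hs : 0 < s) :
    Integrable (fun t : ℝ => G t * ((s / ((t - a)^2 + s^2) : ℝ) : ℂ)) ∧ 
    ∫ t : ℝ, G t * ((s / ((t - a)^2 + s^2) : ℝ) : ℂ) = Real.pi * G (a + s * Complex.I) := by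
  set p : ℂ := a + s * Complex.I with hp
  have hpim : p.im = s := by simp [hp]
  set q : ℂ := a - s * Complex.I with hq
  have hqim : q.im = -s := by simp [hq]
  have hB0 : 0 ≤ B := by
    have := hB 0 (by simp)
    simp at this
    exact (norm_nonneg _).trans this
  have hB1 : ∀ w : ℂ, 0 ≤ w.im → ‖G w‖ ≤ B := fun w hw => 
    (hB w hw).trans (div_le_self hB0 (by linarith [norm_nonneg w]))
  have hGc : Continuous (fun t : ℝ => G t) := by
    refine hG.continuousOn.comp_continuous Complex.continuous_ofReal (fun t => hU _ (by simp))
  have hPi := poisson_int a s hs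
  have i1 : Integrable (fun t : ℝ => G t * ((s / ((t - a)^2 + s^2) : ℝ) : ℂ)) := by
    refine Integrable.bdd_mul (c := B) hPi.1.ofReal hGc.aestronglyMeasurable ?_
    exact Eventually.of_forall fun t => hB1 _ (by simp)
  refine ⟨i1, ?_⟩
  have hker : ∀ t : ℝ, ((t:ℂ) - p) * ((t:ℂ) - q) = (((t - a)^2 + s^2 : ℝ) : ℂ) := by
    intro t
    rw [hp, hq]
    push_cast
    linear_combination (-(s:ℂ)^2) * Complex.I_sq
  have hpos : ∀ t : ℝ, (0:ℝ) < (t - a)^2 + s^2 := fun t => by positivity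
  have hnp : ∀ t : ℝ, (t:ℂ) ≠ p := by
    intro t h
    have := congrArg Complex.im h
    simp [hpim] at this
    linarith
  have hnq : ∀ w : ℂ, 0 ≤ w.im → w - q ≠ 0 := by
    intro w hw h
    have := congrArg Complex.im h
    simp [hqim] at this
    linarith
  let H : ℂ → ℂ := fun w => dslope G p w * (w - q)⁻¹
  have hH : DifferentiableOn ℂ H (U ∩ {w | -s < w.im}) := by
    have hd : DifferentiableOn ℂ (dslope G p) U := 
      (Complex.differentiableOn_dslope (hUo.mem_nhds (hU p (by linarith)))).2 hG
    refine (hd.mono inter_subset_left).mul ?_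
    refine DifferentiableOn.inv (by fun_prop) ?_
    intro w hw h
    have := congrArg Complex.im h
    have h3 : -s < w.im := hw.2
    simp [hqim] at this
    linarith
  have hHt : ∀ t : ℝ, (s:ℂ) * H t = G t * ((s / ((t - a)^2 + s^2) : ℝ) : ℂ) - G p * ((s / ((t - a)^2 + s^2) : ℝ) : ℂ) := by
    intro t
    simp only [H]
    rw [dslope_of_ne _ (hnp t), slope_def_field]
    have h1 : (t:ℂ) - p ≠ 0 := sub_ne_zero.2 (hnp t)
    have h2 : (t:ℂ) - q ≠ 0 := hnq t (by simp)
    rw [Complex.ofReal_div, ← hker t]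
    field_simp
  have hqn : ‖q‖ = ‖p‖ := by
    have : q = (starRingEnd ℂ) p := by simp [hp, hq, sub_eq_add_neg]
    rw [this, Complex.norm_conj]
  have hHi : Integrable (fun t : ℝ => (s:ℂ) * H t) := by
    simp_rw [hHt]
    exact i1.sub (hPi.1.ofReal.const_mul _)
  have hHi2 : Integrable (fun t : ℝ => H t) := by
    have := hHi.const_mul ((s:ℂ)⁻¹)
    refine this.congr (Eventually.of_forall fun t => ?_)
    have : (s:ℂ) ≠ 0 := by exact_mod_cast hs.ne'
    field_simp
  have key := contour_zero H (U ∩ {w | -s < w.im}) 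
    (fun w hw => ⟨hU w hw, by simp only [mem_ofPred_eq]; linarith⟩) hH (8 * B) (2 * ‖p‖ + 1) (by
      intro w hw hw2
      have hwp := decay_bound p w hw2
      have hwq := decay_bound q w (by rw [hqn]; exact hw2)
      have hw0 : 0 < ‖w‖ := by linarith [norm_nonneg p]
      have hne : w ≠ p := by
        rintro rfl
        linarith
      simp only [H]
      rw [dslope_of_ne _ hne, slope_def_field, norm_mul, norm_div, norm_inv]
      have h1 : ‖G w - G p‖ ≤ 2 * B := by
        have := norm_sub_le (G w) (G p)
        have := hB1 w hw
        have := hB1 p (by linarith)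
        linarith
      calc ‖G w - G p‖ / ‖w - p‖ * ‖w - q‖⁻¹ ≤ (2 * B) / (‖w‖/2) * (‖w‖/2)⁻¹ := by gcongr
        _ = 8 * B / ‖w‖^2 := by field_simp; ring) hHi2
  have k2 : ∫ t : ℝ, (s:ℂ) * H t = 0 := by rw [integral_const_mul, key, mul_zero]
  simp_rw [hHt] at k2
  have i3 : Integrable (fun t : ℝ => G p * ((s / ((t - a)^2 + s^2) : ℝ) : ℂ)) := 
    hPi.1.ofReal.const_mul (G p)
  rw [integral_sub i1 i3, integral_const_mul] at k2
  have k3 : ∫ t : ℝ, ((s / ((t - a)^2 + s^2) : ℝ) : ℂ) = Real.pi := by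
    rw [integral_complex_ofReal, hPi.2]
  rw [k3] at k2
  linear_combination k2

lemma sq_decay_integrable : Integrable (fun t : ℝ => ((1 + |t|)^2)⁻¹) := by
  refine integrable_inv_one_add_sq.mono' (by fun_prop) (Eventually.of_forall fun t => ?_)
  rw [Real.norm_of_nonneg (by positivity)]
  gcongr
  nlinarith [abs_nonneg t, sq_abs t]

lemma cauchy_G (G : ℂ → ℂ) (U : Set ℂ) (hUo : IsOpen U) (hU : ∀ w : ℂ, 0 ≤ w.im → w ∈ U)
    (hG : DifferentiableOn ℂ G U) (B : ℝ)
    (hB : ∀ w : ℂ, 0 ≤ w.im → ‖G w‖ ≤ B / (1 + ‖w‖)) (a s : ℝ) (hs : 0 < s) :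
    ∫ t : ℝ, G t * ((t:ℂ) - (a + s * Complex.I))⁻¹ = 2 * Real.pi * Complex.I * G (a + s * Complex.I) := by
  obtain ⟨i1, h1⟩ := poisson_G G U hUo hU hG B hB a s hs
  set p : ℂ := a + s * Complex.I with hp
  have hpim : p.im = s := by simp [hp]
  set q : ℂ := a - s * Complex.I with hq
  have hqim : q.im = -s := by simp [hq]
  have hB0 : 0 ≤ B := by
    have := hB 0 (by simp)
    simp at this
    exact (norm_nonneg _).trans this
  have hGc : Continuous (fun t : ℝ => G t) := by
    refine hG.continuousOn.comp_continuous Complex.continuous_ofReal (fun t => hU _ (by simp))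
  have hker : ∀ t : ℝ, ((t:ℂ) - p) * ((t:ℂ) - q) = (((t - a)^2 + s^2 : ℝ) : ℂ) := by
    intro t
    rw [hp, hq]
    push_cast
    linear_combination (-(s:ℂ)^2) * Complex.I_sq
  have hnp : ∀ t : ℝ, (t:ℂ) - p ≠ 0 := by
    intro t h
    have := congrArg Complex.im h
    simp [hpim] at this
    linarith
  have hnq : ∀ w : ℂ, -s < w.im → w - q ≠ 0 := by
    intro w hw h
    have := congrArg Complex.im h
    simp [hqim] at this
    linarith
  have hqn : ‖q‖ = ‖p‖ := by
    have : q = (starRingEnd ℂ) p := by simp [hp, hq, sub_eq_add_neg]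
    rw [this, Complex.norm_conj]
  have hd : DifferentiableOn ℂ (fun w => G w * (w - q)⁻¹) (U ∩ {w | -s < w.im}) := by
    refine (hG.mono inter_subset_left).mul ?_
    exact DifferentiableOn.inv (by fun_prop) (fun w hw => hnq w hw.2)
  have hsub : ∀ w : ℂ, 0 ≤ w.im → w ∈ (U ∩ {w | -s < w.im}) := 
    fun w hw => ⟨hU w hw, by simp only [mem_ofPred_eq]; linarith⟩
  have hct : Continuous (fun t : ℝ => G t * ((t:ℂ) - q)⁻¹) :=
    hd.continuousOn.comp_continuous Complex.continuous_ofReal (fun t => hsub _ (by simp))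
  have hbig : ∀ w : ℂ, 0 ≤ w.im → 2 * ‖p‖ + 1 ≤ ‖w‖ → ‖G w * (w - q)⁻¹‖ ≤ (2 * B) / ‖w‖^2 := by
    intro w hw hw2
    have hwq := decay_bound q w (by rw [hqn]; exact hw2)
    have hw0 : 0 < ‖w‖ := by linarith [norm_nonneg p]
    rw [norm_mul, norm_inv]
    calc ‖G w‖ * ‖w - q‖⁻¹ ≤ (B / ‖w‖) * (‖w‖/2)⁻¹ := by
          gcongr
          refine (hB w hw).trans ?_
          gcongr
          linarith
      _ = _ := by field_simp
  have i2 : Integrable (fun t : ℝ => G t * ((t:ℂ) - q)⁻¹) := by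
    have hlow : ∀ t : ℝ, (1 + |t|) * (s / (1 + s + |a|)) ≤ ‖(t:ℂ) - q‖ := by
      intro t
      have h1 : s ≤ ‖(t:ℂ) - q‖ := by
        have := Complex.abs_im_le_norm ((t:ℂ) - q)
        simp [hqim] at this
        exact (le_abs_self s).trans this
      have h2 : |t| - |a| ≤ ‖(t:ℂ) - q‖ := by
        have := Complex.abs_re_le_norm ((t:ℂ) - q)
        simp [hq] at this
        exact (abs_sub_abs_le_abs_sub t a).trans this
      have h3 : 0 < 1 + s + |a| := by positivity
      rw [mul_div_assoc', div_le_iff₀ h3]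
      nlinarith [abs_nonneg a]
    refine (sq_decay_integrable.const_mul (B * (s / (1 + s + |a|))⁻¹)).mono' hct.aestronglyMeasurable
      (Eventually.of_forall fun t => ?_)
    rw [norm_mul, norm_inv]
    have h4 := hB t (by simp)
    rw [Complex.norm_real, Real.norm_eq_abs] at h4
    calc ‖G t‖ * ‖(t:ℂ) - q‖⁻¹ ≤ (B / (1 + |t|)) * ((1 + |t|) * (s / (1 + s + |a|)))⁻¹ := by
          gcongr
          exact hlow t
      _ = _ := by field_simp
  have z := contour_zero (fun w => G w * (w - q)⁻¹) _ hsub hd (2 * B) (2 * ‖p‖ + 1) hbig i2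
  have e : ∀ t : ℝ, G t * ((t:ℂ) - p)⁻¹ = G t * ((t:ℂ) - q)⁻¹ + 
      (2 * Complex.I) * (G t * ((s / ((t - a)^2 + s^2) : ℝ) : ℂ)) := by
    intro t
    have h1 := hnp t
    have h2 : (t:ℂ) - q ≠ 0 := hnq t (by simp [hs])
    rw [Complex.ofReal_div, ← hker t]
    have h3 : p - q = 2 * Complex.I * s := by rw [hp, hq]; ring
    field_simp
    linear_combination (G t) * h3
  simp_rw [e]
  rw [integral_add i2 (i1.const_mul _), z, integral_const_mul, h1]
  ring


lemma dyadic_kernel (s r : ℝ) (hs : 0 < s) (hr : 0 ≤ r) : 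
    ∃ k : ℕ, r ≤ 2^k * s ∧ s / (r^2 + s^2) ≤ 4 / (4^k * s) := by
  have hex : ∃ k : ℕ, r ≤ 2^k * s := by
    obtain ⟨k, hk⟩ := pow_unbounded_of_one_lt (r / s) (one_lt_two)
    exact ⟨k, by rw [div_lt_iff₀ hs] at hk; exact hk.le⟩
  classical
  refine ⟨Nat.find hex, Nat.find_spec hex, ?_⟩
  rcases h : Nat.find hex with _ | k
  · rw [pow_zero, one_mul, div_le_div_iff₀ (by positivity) hs]
    nlinarith [sq_nonneg r, sq_nonneg s]
  · have hk : ¬ (r ≤ 2^k * s) := Nat.find_min hex (by omega)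
    push Not at hk
    have h2 : (2^k * s)^2 ≤ r^2 := by gcongr
    have h4 : (4:ℝ)^k = (2^k)^2 := by rw [← pow_mul, mul_comm, pow_mul]; norm_num
    rw [pow_succ (4:ℝ), h4, div_le_div_iff₀ (by positivity) (by positivity)]
    nlinarith [sq_nonneg s]

lemma avg_bound (g : ℝ → ℂ) (hg : MemLp g 2) (t : ℝ) 
    (ht : Tendsto (fun r : ℝ => ⨍ x in Metric.closedBall t r, ‖g x - g t‖) (𝓝[>] 0) (𝓝 0)) :
    ∃ M : ℝ, ∀ r > 0, ⨍ x in Metric.closedBall t r, ‖g x - g t‖ ≤ M := by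
  have hloc : LocallyIntegrable g := hg.locallyIntegrable (by norm_num)
  have h1 : ∀ᶠ r in 𝓝[>] (0:ℝ), ⨍ x in Metric.closedBall t r, ‖g x - g t‖ ≤ 1 :=
    ht.eventually (eventually_le_nhds one_pos)
  rw [eventually_nhdsWithin_iff, Metric.eventually_nhds_iff] at h1
  obtain ⟨δ, hδ, h1⟩ := h1
  have hN : Integrable (fun x => ‖g x‖^2) := hg.integrable_norm_pow (p := 2) (by norm_num)
  set N := ∫ x, ‖g x‖^2
  have hN0 : 0 ≤ N := integral_nonneg fun x => by positivity
  refine ⟨max 1 (1 + ‖g t‖ + N / (2 * δ)), fun r hr => ?_⟩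
  by_cases hrd : r < δ
  · exact (h1 (by simpa [abs_of_pos hr] using hrd) hr).trans (le_max_left _ _)
  · push Not at hrd
    refine le_trans ?_ (le_max_right _ _)
    rw [setAverage_eq]
    have hv : volume.real (Metric.closedBall t r) = 2 * r := by
      rw [measureReal_def, Real.volume_closedBall, ENNReal.toReal_ofReal (by linarith)]
    have hgi : IntegrableOn g (Metric.closedBall t r) := 
      hloc.integrableOn_isCompact (isCompact_closedBall t r)
    have hci : ∀ c : ℝ, IntegrableOn (fun _ => c) (Metric.closedBall t r) := fun c =>
      integrableOn_const (by rw [Real.volume_closedBall]; exact ENNReal.ofReal_ne_top)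
    have hcc : IntegrableOn (fun _ => g t) (Metric.closedBall t r) := 
      integrableOn_const (by rw [Real.volume_closedBall]; exact ENNReal.ofReal_ne_top)
    have hle : ∫ x in Metric.closedBall t r, ‖g x - g t‖ ≤ 
        ∫ x in Metric.closedBall t r, (1 + ‖g t‖) + ‖g x‖^2 := by
      refine integral_mono (hgi.sub hcc).norm ((hci _).add hN.integrableOn) (fun x => ?_)
      have := norm_sub_le (g x) (g t)
      show ‖g x - g t‖ ≤ (1 + ‖g t‖) + ‖g x‖^2
      nlinarith [norm_nonneg (g x)]
    rw [integral_add (hci _) hN.integrableOn, setIntegral_const, hv] at hle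
    have h2 : ∫ x in Metric.closedBall t r, ‖g x‖^2 ≤ N := 
      setIntegral_le_integral hN (Eventually.of_forall fun x => by positivity)
    rw [hv, smul_eq_mul]
    rw [smul_eq_mul] at hle
    calc (2*r)⁻¹ * ∫ x in Metric.closedBall t r, ‖g x - g t‖ ≤ (2*r)⁻¹ * (2 * r * (1 + ‖g t‖) + N) := by
          gcongr; linarith
      _ = 1 + ‖g t‖ + N / (2 * r) := by field_simp
      _ ≤ _ := by gcongr

lemma lebesgue_point (g : ℝ → ℂ) (hg : MemLp g 2) (t : ℝ) 
    (ht : Tendsto (fun r : ℝ => ⨍ x in Metric.closedBall t r, ‖g x - g t‖) (𝓝[>] 0) (𝓝 0)) :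
    Tendsto (fun s : ℝ => ∫⁻ x, ENNReal.ofReal (s / ((x - t)^2 + s^2) * ‖g x - g t‖)) (𝓝[>] 0) (𝓝 0) := by
  obtain ⟨M, hM⟩ := avg_bound g hg t ht
  have hloc : LocallyIntegrable g := hg.locallyIntegrable (by norm_num)
  set a : ℝ → ℝ := fun r => ⨍ x in Metric.closedBall t r, ‖g x - g t‖ with ha
  have ha0 : ∀ r, 0 ≤ a r := fun r => by
    simp only [ha]; rw [setAverage_eq]; positivity
  have hInt0 : ∀ r, IntegrableOn (fun x => ‖g x - g t‖) (Metric.closedBall t r) := fun r =>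
    ((hloc.integrableOn_isCompact (isCompact_closedBall t r)).sub 
      (integrableOn_const (by rw [Real.volume_closedBall]; exact ENNReal.ofReal_ne_top))).norm
  have haint : ∀ r > 0, ∫ x in Metric.closedBall t r, ‖g x - g t‖ = 2 * r * a r := by
    intro r hr
    simp only [ha]
    have hv : volume.real (Metric.closedBall t r) = 2 * r := by
      rw [measureReal_def, Real.volume_closedBall, ENNReal.toReal_ofReal (by linarith)]
    rw [setAverage_eq, hv, smul_eq_mul]
    field_simp
  have hgeo : Summable (fun k : ℕ => 8 * M * (1/2:ℝ)^k) := (summable_geometric_two).mul_left _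
  have hbd : ∀ s > 0, ∀ k : ℕ, ‖8 * (1/2:ℝ)^k * a (2^k * s)‖ ≤ 8 * M * (1/2:ℝ)^k := by
    intro s hs k
    rw [Real.norm_of_nonneg (by have := ha0 (2^k*s); positivity)]
    have := hM (2^k*s) (by positivity)
    have h3 : (0:ℝ) ≤ 8 * (1/2:ℝ)^k := by positivity
    nlinarith [mul_le_mul_of_nonneg_left this h3]
  have hlim : Tendsto (fun s : ℝ => ∑' k : ℕ, 8 * (1/2:ℝ)^k * a (2^k * s)) (𝓝[>] 0) (𝓝 (∑' k : ℕ, (0:ℝ))) := by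
    refine tendsto_tsum_of_dominated_convergence hgeo ?_ ?_
    · intro k
      have h1 : Tendsto (fun s : ℝ => 2^k * s) (𝓝[>] 0) (𝓝[>] 0) := by
        refine tendsto_nhdsWithin_iff.2 ⟨?_, ?_⟩
        · have : Tendsto (fun s : ℝ => (2:ℝ)^k * s) (𝓝 0) (𝓝 ((2:ℝ)^k * 0)) := tendsto_id.const_mul _
          rw [mul_zero] at this
          exact this.mono_left nhdsWithin_le_nhds
        · filter_upwards [self_mem_nhdsWithin] with s hs
          have : (0:ℝ) < s := hs
          show (0:ℝ) < 2^k * s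
          positivity
      have := (ht.comp h1).const_mul (8 * (1/2:ℝ)^k)
      rw [mul_zero] at this
      exact this
    · filter_upwards [self_mem_nhdsWithin] with s hs k using hbd s hs k
  rw [tsum_zero] at hlim
  have hlim2 := ENNReal.tendsto_ofReal hlim
  rw [ENNReal.ofReal_zero] at hlim2
  refine tendsto_of_tendsto_of_tendsto_of_le_of_le' tendsto_const_nhds hlim2 
    (Eventually.of_forall fun _ => zero_le) ?_
  filter_upwards [self_mem_nhdsWithin] with s hs
  have hs : (0:ℝ) < s := hs
  rw [ENNReal.ofReal_tsum_of_nonneg (fun k => by have := ha0 (2^k*s); positivity)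
    (hgeo.of_norm_bounded (hbd s hs))]
  have hpt : ∀ x, ENNReal.ofReal (s / ((x - t)^2 + s^2) * ‖g x - g t‖) ≤ 
     ∑' k : ℕ, (Metric.closedBall t (2^k*s)).indicator 
        (fun x => ENNReal.ofReal (4 / (4^k * s) * ‖g x - g t‖)) x := by
    intro x
    obtain ⟨k, hk1, hk2⟩ := dyadic_kernel s |x - t| hs (abs_nonneg _)
    refine le_trans ?_ (ENNReal.le_tsum k)
    rw [indicator_of_mem (by rw [Metric.mem_closedBall, Real.dist_eq]; exact hk1)]
    apply ENNReal.ofReal_le_ofReal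
    rw [sq_abs] at hk2
    gcongr
  have hgm := hg.1
  refine (lintegral_mono hpt).trans ?_
  rw [lintegral_tsum (fun k => by
    refine AEMeasurable.indicator ?_ Metric.isClosed_closedBall.measurableSet
    have : AEMeasurable (fun x => ‖g x - g t‖) := (hgm.sub aestronglyMeasurable_const).norm.aemeasurable
    exact (this.const_mul _).ennreal_ofReal)]
  refine ENNReal.tsum_le_tsum fun k => ?_
  rw [lintegral_indicator Metric.isClosed_closedBall.measurableSet, 
    ← ofReal_integral_eq_lintegral_ofReal ((hInt0 _).const_mul _) 
      (Eventually.of_forall fun x => by simp only [Pi.zero_apply]; positivity)]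
  apply ENNReal.ofReal_le_ofReal
  rw [integral_const_mul, haint _ (by positivity)]
  apply le_of_eq
  have h4 : (4:ℝ)^k = 2^k * 2^k := by rw [← mul_pow]; norm_num
  rw [h4, one_div, inv_pow]
  field_simp
  ring

lemma lebesgue_point_ae (g : ℝ → ℂ) (hg : MemLp g 2) : ∀ᵐ t : ℝ, 
    Tendsto (fun s : ℝ => ∫⁻ x, ENNReal.ofReal (s / ((x - t)^2 + s^2) * ‖g x - g t‖)) (𝓝[>] 0) (𝓝 0) := by
  have hloc : LocallyIntegrable g := hg.locallyIntegrable (by norm_num)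
  filter_upwards [IsUnifLocDoublingMeasure.ae_tendsto_average_norm_sub volume hloc 1] with t ht
  refine lebesgue_point g hg t (ht (fun _ => t) (fun r => r) tendsto_id ?_)
  filter_upwards [self_mem_nhdsWithin] with s hs
  have hs : (0:ℝ) < s := hs
  simp [hs.le]

/-- kernels dominated by the Poisson kernel with total mass `m` -/
lemma kernel_limit (g : ℝ → ℂ) (hg : MemLp g 2) (t : ℝ) (K : ℝ → ℝ → ℝ) (m : ℝ)
    (hKb : ∀ s > 0, ∀ x, |K s x| ≤ s / ((x - t)^2 + s^2))
    (hKi : ∀ s > 0, Integrable (fun x => (K s x : ℂ) * g x))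
    (hKm : ∀ s > 0, Integrable (K s) ∧ ∫ x, K s x = m)
    (ht : Tendsto (fun s : ℝ => ∫⁻ x, ENNReal.ofReal (s / ((x - t)^2 + s^2) * ‖g x - g t‖)) (𝓝[>] 0) (𝓝 0)) :
    Tendsto (fun s : ℝ => ∫ x, (K s x : ℂ) * g x) (𝓝[>] 0) (𝓝 (m * g t)) := by
  rw [tendsto_iff_edist_tendsto_0]
  refine tendsto_of_tendsto_of_tendsto_of_le_of_le' tendsto_const_nhds ht
    (Eventually.of_forall fun _ => zero_le) ?_
  filter_upwards [self_mem_nhdsWithin] with s hs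
  have hs : (0:ℝ) < s := hs
  have i2 : Integrable (fun x => (K s x : ℂ) * g t) := (hKm s hs).1.ofReal.mul_const _
  have e : (m * g t : ℂ) = ∫ x, (K s x : ℂ) * g t := by
    rw [integral_mul_const, integral_complex_ofReal, (hKm s hs).2]
  rw [e, edist_eq_enorm_sub, ← integral_sub (hKi s hs) i2]
  refine (enorm_integral_le_lintegral_enorm _).trans (lintegral_mono fun x => ?_)
  rw [← ofReal_norm, ← mul_sub, norm_mul, Complex.norm_real, Real.norm_eq_abs]
  apply ENNReal.ofReal_le_ofReal
  gcongr
  exact hKb s hs x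


noncomputable def ctr (A : Set ℝ) (z : ℂ) : ℂ := 
  (Real.pi * Complex.I)⁻¹ * ∫ x in A, ((x:ℂ) - z)⁻¹

lemma dist_lower (y : ℝ) (hy : 0 < y) (z : ℂ) (hz : y ≤ z.im) (x : ℝ) (hx : x ∈ Ioo (-1:ℝ) 1) :
    y / (y + 2) * (1 + ‖z‖) ≤ ‖(x:ℂ) - z‖ := by
  have h1 : y ≤ ‖(x:ℂ) - z‖ := by
    have := Complex.abs_im_le_norm ((x:ℂ) - z)
    simp at this
    exact hz.trans ((le_abs_self _).trans this)
  have h2 : ‖z‖ - 1 ≤ ‖(x:ℂ) - z‖ := by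
    have := norm_sub_norm_le z (x:ℂ)
    rw [norm_sub_rev] at this
    have h3 : ‖(x:ℂ)‖ ≤ 1 := by
      rw [Complex.norm_real, Real.norm_eq_abs, abs_le]; exact ⟨hx.1.le, hx.2.le⟩
    linarith
  rw [div_mul_eq_mul_div, div_le_iff₀ (by linarith)]
  nlinarith

lemma volA_lt (A : Set ℝ) (hA' : A ⊆ Ioo (-1:ℝ) 1) : volume A < ⊤ :=
  (measure_mono hA').trans_lt (by simp)

lemma ctr_bound (A : Set ℝ) (hA : MeasurableSet A) (hA' : A ⊆ Ioo (-1:ℝ) 1) (y : ℝ) (hy : 0 < y) :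
    ∃ B : ℝ, ∀ z : ℂ, y ≤ z.im → ‖ctr A z‖ ≤ B / (1 + ‖z‖) := by
  refine ⟨‖((Real.pi:ℂ) * Complex.I)⁻¹‖ * ((y + 2) / y * volume.real A), fun z hz => ?_⟩
  rw [ctr, norm_mul, mul_div_assoc]
  gcongr
  have := norm_setIntegral_le_of_norm_le_const (μ := volume) (s := A) (f := fun x : ℝ => ((x:ℂ) - z)⁻¹) 
    (C := (y / (y + 2) * (1 + ‖z‖))⁻¹) (volA_lt A hA') (fun x hx => by
      rw [norm_inv]
      gcongr
      exact dist_lower y hy z hz x (hA' hx))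
  refine this.trans (le_of_eq ?_)
  have : 0 < 1 + ‖z‖ := by positivity
  field_simp

lemma ctr_diff (A : Set ℝ) (hA : MeasurableSet A) (hA' : A ⊆ Ioo (-1:ℝ) 1) :
    DifferentiableOn ℂ (ctr A) {z | 0 < z.im} := by
  intro z hz
  have hz : 0 < z.im := hz
  apply DifferentiableAt.differentiableWithinAt
  have hfin : IsFiniteMeasure (volume.restrict A) := ⟨by simpa using volA_lt A hA'⟩
  have hs : {w : ℂ | z.im / 2 < w.im} ∈ 𝓝 z := 
    (isOpen_lt continuous_const Complex.continuous_im).mem_nhds (by simp only [mem_ofPred_eq]; linarith)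
  have hlow : ∀ w : ℂ, z.im / 2 < w.im → ∀ x : ℝ, z.im / 2 ≤ ‖(x:ℂ) - w‖ := by
    intro w hw x
    have := Complex.abs_im_le_norm ((x:ℂ) - w)
    simp at this
    exact hw.le.trans ((le_abs_self _).trans this)
  have hne : ∀ w : ℂ, z.im / 2 < w.im → ∀ x : ℝ, (x:ℂ) - w ≠ 0 := by
    intro w hw x h
    have := hlow w hw x
    rw [h, norm_zero] at this
    linarith
  have hm : ∀ w : ℂ, AEStronglyMeasurable (fun x : ℝ => ((x:ℂ) - w)⁻¹) (volume.restrict A) := by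
    intro w
    apply Measurable.aestronglyMeasurable
    fun_prop
  have := hasDerivAt_integral_of_dominated_loc_of_deriv_le (μ := volume.restrict A) (𝕜 := ℂ)
    (F := fun (w : ℂ) (x : ℝ) => ((x:ℂ) - w)⁻¹) (F' := fun w x => 1 / ((x:ℂ) - w)^2) 
    (x₀ := z) (bound := fun _ => 1 / (z.im/2)^2) hs
    (Eventually.of_forall hm)
    (by
      refine Integrable.of_bound (hm z) (z.im/2)⁻¹ (Eventually.of_forall fun x => ?_)
      rw [norm_inv]
      have := hlow z (by linarith) x
      gcongr)
    (by
      apply Measurable.aestronglyMeasurable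
      fun_prop)
    (Eventually.of_forall fun x w hw => by
      rw [norm_div, norm_one, norm_pow]
      have := hlow w hw x
      gcongr)
    (integrable_const _)
    (Eventually.of_forall fun x w hw => by
      have h1 : HasDerivAt (fun w : ℂ => ((x:ℂ) - w)⁻¹) (-(-1) / ((x:ℂ) - w)^2) w :=
        HasDerivAt.fun_inv (((hasDerivAt_id w).const_sub (x:ℂ))) (hne w hw x)
      rwa [neg_neg] at h1)
  exact (this.2.differentiableAt.const_mul _)

lemma ctr_split (A : Set ℝ) (hA : MeasurableSet A) (hA' : A ⊆ Ioo (-1:ℝ) 1) (t s : ℝ) (hs : 0 < s) :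
    ctr A (t + s * Complex.I) = (Real.pi:ℂ)⁻¹ * (∫ x, ((s / ((x - t)^2 + s^2) : ℝ) : ℂ) * A.indicator (fun _ => (1:ℂ)) x)
     - Complex.I * ((Real.pi:ℂ)⁻¹ * (∫ x, (((x - t) / ((x - t)^2 + s^2) : ℝ) : ℂ) * A.indicator (fun _ => (1:ℂ)) x)) := by
  have hfin : IsFiniteMeasure (volume.restrict A) := ⟨by simpa using volA_lt A hA'⟩
  have e : ∀ φ : ℝ → ℂ, ∫ x, φ x * A.indicator (fun _ => (1:ℂ)) x = ∫ x in A, φ x := by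
    intro φ
    rw [← integral_indicator hA]
    congr 1
    ext x
    by_cases hx : x ∈ A <;> simp [hx]
  rw [e, e, ctr]
  have hpos : ∀ x : ℝ, (0:ℝ) < (x - t)^2 + s^2 := fun x => by positivity
  have e2 : ∀ x : ℝ, ((x:ℂ) - (t + s * Complex.I))⁻¹ = (((x - t) / ((x - t)^2 + s^2) : ℝ) : ℂ) 
      + Complex.I * ((s / ((x - t)^2 + s^2) : ℝ) : ℂ) := by
    intro x
    have h0 : (((x - t)^2 + s^2 : ℝ) : ℂ) ≠ 0 := by exact_mod_cast (hpos x).ne'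
    apply inv_eq_of_mul_eq_one_right
    push_cast at h0 ⊢
    field_simp
    linear_combination (-(s:ℂ)^2) * Complex.I_sq
  have i1 : Integrable (fun x : ℝ => (((x - t) / ((x - t)^2 + s^2) : ℝ) : ℂ)) (volume.restrict A) := by
    refine Integrable.of_bound (by apply Measurable.aestronglyMeasurable; fun_prop) (1/s) (Eventually.of_forall fun x => ?_)
    rw [Complex.norm_real, Real.norm_eq_abs, abs_div, abs_of_pos (hpos x), div_le_div_iff₀ (hpos x) hs]
    nlinarith [sq_nonneg (|x - t| - s), sq_abs (x - t), abs_nonneg (x-t)]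
  have i2 : Integrable (fun x : ℝ => ((s / ((x - t)^2 + s^2) : ℝ) : ℂ)) (volume.restrict A) := 
    (poisson_int t s hs).1.ofReal.integrableOn
  simp_rw [e2]
  rw [integral_add i1 (i2.const_mul _), integral_const_mul, mul_inv, Complex.inv_I]
  linear_combination (-(Real.pi:ℂ)⁻¹ * ∫ (a : ℝ) in A, ((s / ((a - t)^2 + s^2) : ℝ) : ℂ)) * Complex.I_sq

lemma ctr_re (A : Set ℝ) (hA : MeasurableSet A) (hA' : A ⊆ Ioo (-1:ℝ) 1) (t s : ℝ) (hs : 0 < s) :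
    (ctr A (t + s * Complex.I)).re = Real.pi⁻¹ * ∫ x in A, s / ((x - t)^2 + s^2) := by
  have e : ∀ φ : ℝ → ℝ, ∫ x, (φ x : ℂ) * A.indicator (fun _ => (1:ℂ)) x = ((∫ x in A, φ x : ℝ) : ℂ) := by
    intro φ
    rw [← integral_complex_ofReal, ← integral_indicator hA]
    congr 1
    ext x
    by_cases hx : x ∈ A <;> simp [hx]
  rw [ctr_split A hA hA' t s hs, e, e, ← Complex.ofReal_inv, ← Complex.ofReal_mul, ← Complex.ofReal_mul]
  simp

lemma ctr_re_mem (A : Set ℝ) (hA : MeasurableSet A) (hA' : A ⊆ Ioo (-1:ℝ) 1) (t s : ℝ) (hs : 0 < s) :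
    0 ≤ (ctr A (t + s * Complex.I)).re ∧ (ctr A (t + s * Complex.I)).re ≤ 1 := by
  rw [ctr_re A hA hA' t s hs]
  have hp := Real.pi_pos
  obtain ⟨h1, h2⟩ := poisson_int t s hs
  constructor
  · have : 0 ≤ ∫ x in A, s / ((x - t)^2 + s^2) := integral_nonneg fun x => by positivity
    positivity
  · have : ∫ x in A, s / ((x - t)^2 + s^2) ≤ Real.pi := by
      rw [← h2]
      exact setIntegral_le_integral h1 (Eventually.of_forall fun x => by simp only [Pi.zero_apply]; positivity)
    rw [inv_mul_le_iff₀ hp]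
    linarith

lemma ind_memLp (A : Set ℝ) (hA : MeasurableSet A) (hA' : A ⊆ Ioo (-1:ℝ) 1) : 
   MemLp (A.indicator (fun _ => (1:ℂ))) 2 :=
  memLp_indicator_const 2 hA 1 (Or.inr (volA_lt A hA').ne)

lemma ker_ind_int (A : Set ℝ) (hA : MeasurableSet A) (K : ℝ → ℝ) (hK : Integrable K) : 
    Integrable (fun x => (K x : ℂ) * A.indicator (fun _ => (1:ℂ)) x) := by
  have : (fun x => (K x : ℂ) * A.indicator (fun _ => (1:ℂ)) x) = A.indicator (fun x => (K x : ℂ)) := by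
    ext x
    by_cases hx : x ∈ A <;> simp [hx]
  rw [this]
  exact (hK.ofReal).indicator hA

lemma ctr_re_tendsto (A : Set ℝ) (hA : MeasurableSet A) (hA' : A ⊆ Ioo (-1:ℝ) 1) (t : ℝ)
    (ht : Tendsto (fun s : ℝ => ∫⁻ x, ENNReal.ofReal (s / ((x - t)^2 + s^2) * ‖A.indicator (fun _ => (1:ℂ)) x - A.indicator (fun _ => (1:ℂ)) t‖)) (𝓝[>] 0) (𝓝 0)) :
    Tendsto (fun s : ℝ => (Real.pi:ℂ)⁻¹ * (∫ x, ((s / ((x - t)^2 + s^2) : ℝ) : ℂ) * A.indicator (fun _ => (1:ℂ)) x))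
      (𝓝[>] 0) (𝓝 (A.indicator (fun _ => (1:ℂ)) t)) := by
  have := kernel_limit _ (ind_memLp A hA hA') t (fun s x => s / ((x - t)^2 + s^2)) Real.pi
    (fun s hs x => by rw [abs_of_nonneg (by positivity)])
    (fun s hs => ker_ind_int A hA _ (poisson_int t s hs).1)
    (fun s hs => poisson_int t s hs) ht
  have h2 := this.const_mul ((Real.pi:ℂ)⁻¹)
  have hp : (Real.pi:ℂ) ≠ 0 := by exact_mod_cast Real.pi_ne_zero
  rw [inv_mul_cancel_left₀ hp] at h2
  exact h2

noncomputable def dker (t s x : ℝ) : ℝ := 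
  (x - t) / ((x - t)^2 + s^2) - (if s < |x - t| then (x - t)⁻¹ else 0)

lemma dker_meas (t s : ℝ) : Measurable (dker t s) := by
  unfold dker
  refine Measurable.sub (by fun_prop) (Measurable.ite ?_ (by fun_prop) (by fun_prop))
  exact measurableSet_lt measurable_const (by fun_prop)

lemma dker_bound (t s x : ℝ) (hs : 0 < s) : |dker t s x| ≤ s / ((x - t)^2 + s^2) := by
  unfold dker
  generalize x - t = u
  have hpos : 0 < u^2 + s^2 := by positivity
  split_ifs with h
  · have hu : 0 < |u| := hs.trans h
    have hu0 : u ≠ 0 := abs_pos.1 hu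
    have e : u / (u^2 + s^2) - u⁻¹ = -(s^2 / (u * (u^2 + s^2))) := by field_simp; ring
    rw [e, abs_neg, abs_div, abs_mul, abs_of_pos hpos, abs_of_nonneg (sq_nonneg s), 
      div_le_div_iff₀ (by positivity) hpos]
    have : s * s ≤ s * |u| := by gcongr
    nlinarith [mul_le_mul_of_nonneg_right this hpos.le]
  · push Not at h
    rw [sub_zero, abs_div, abs_of_pos hpos]
    gcongr

lemma dker_int (t s : ℝ) (hs : 0 < s) : Integrable (dker t s) ∧ ∫ x, dker t s x = 0 := by
  refine ⟨(poisson_int t s hs).1.mono' (dker_meas t s).aestronglyMeasurable 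
    (Eventually.of_forall fun x => dker_bound t s x hs), ?_⟩
  have h1 : ∫ x, dker t s (2 * t - x) = ∫ x, dker t s x := 
    integral_sub_left_eq_self (dker t s) volume (2 * t)
  have h2 : ∀ x, dker t s (2 * t - x) = - dker t s x := by
    intro x
    unfold dker
    have : 2 * t - x - t = -(x - t) := by ring
    rw [this, abs_neg, neg_sq]
    split_ifs
    · rw [inv_neg]; ring
    · ring
  simp_rw [h2] at h1
  rw [integral_neg] at h1
  linarith

lemma trunc_eq (A : Set ℝ) (hA : MeasurableSet A) (hA' : A ⊆ Ioo (-1:ℝ) 1) (t s : ℝ) (hs : 0 < s) :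
   (∫ x in Ioo (-1:ℝ) (t - s), A.indicator (fun _ => (1:ℂ)) x / ((x : ℂ) - (t : ℂ))) +
      ∫ x in Ioo (t + s) (1:ℝ), A.indicator (fun _ => (1:ℂ)) x / ((x : ℂ) - (t : ℂ)) = 
    (∫ x, (((x - t) / ((x - t)^2 + s^2) : ℝ) : ℂ) * A.indicator (fun _ => (1:ℂ)) x) 
      - ∫ x, (dker t s x : ℂ) * A.indicator (fun _ => (1:ℂ)) x := by
  have hfin : IsFiniteMeasure (volume.restrict A) := ⟨by simpa using volA_lt A hA'⟩
  have hpos : ∀ x : ℝ, (0:ℝ) < (x - t)^2 + s^2 := fun x => by positivity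
  have i1 : Integrable (fun x : ℝ => (((x - t) / ((x - t)^2 + s^2) : ℝ) : ℂ)) (volume.restrict A) := by
    refine Integrable.of_bound (by apply Measurable.aestronglyMeasurable; fun_prop) (1/s) (Eventually.of_forall fun x => ?_)
    rw [Complex.norm_real, Real.norm_eq_abs, abs_div, abs_of_pos (hpos x), div_le_div_iff₀ (hpos x) hs]
    nlinarith [sq_nonneg (|x - t| - s), sq_abs (x - t), abs_nonneg (x-t)]
  have i1' : Integrable (fun x : ℝ => (((x - t) / ((x - t)^2 + s^2) : ℝ) : ℂ) * A.indicator (fun _ => (1:ℂ)) x) := by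
    have : (fun x : ℝ => (((x - t) / ((x - t)^2 + s^2) : ℝ) : ℂ) * A.indicator (fun _ => (1:ℂ)) x) 
      = A.indicator (fun x => (((x - t) / ((x - t)^2 + s^2) : ℝ) : ℂ)) := by
      ext x
      by_cases hx : x ∈ A <;> simp [hx]
    rw [this]
    exact (integrable_indicator_iff hA).2 i1
  have i2 := ker_ind_int A hA _ (dker_int t s hs).1
  rw [← integral_sub i1' i2]
  have e0 : ∀ x : ℝ, (((x - t) / ((x - t)^2 + s^2) : ℝ) : ℂ) * A.indicator (fun _ => (1:ℂ)) x - 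
      (dker t s x : ℂ) * A.indicator (fun _ => (1:ℂ)) x = 
      (Ioo (-1:ℝ) (t - s)).indicator (fun x => A.indicator (fun _ => (1:ℂ)) x / ((x : ℂ) - (t : ℂ))) x
      + (Ioo (t + s) (1:ℝ)).indicator (fun x => A.indicator (fun _ => (1:ℂ)) x / ((x : ℂ) - (t : ℂ))) x := by
    intro x
    by_cases hx : x ∈ A
    · have hx1 := hA' hx
      simp only [indicator_of_mem hx, mul_one]
      unfold dker
      by_cases h1 : x < t - s
      · have h2 : s < |x - t| := by rw [lt_abs]; right; linarith
        rw [if_pos h2, indicator_of_mem (show x ∈ Ioo (-1:ℝ) (t - s) from ⟨hx1.1, h1⟩),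
          indicator_of_notMem (fun h : x ∈ Ioo (t + s) (1:ℝ) => by linarith [h.1])]
        simp [hx]
      · by_cases h3 : t + s < x
        · have h2 : s < |x - t| := by rw [lt_abs]; left; linarith
          rw [if_pos h2, indicator_of_mem (show x ∈ Ioo (t + s) (1:ℝ) from ⟨h3, hx1.2⟩),
            indicator_of_notMem (fun h : x ∈ Ioo (-1:ℝ) (t - s) => by linarith [h.2])]
          simp [hx]
        · have h2 : ¬ s < |x - t| := by
            rw [not_lt, abs_le]; constructor <;> linarith
          rw [if_neg h2, indicator_of_notMem (fun h : x ∈ Ioo (-1:ℝ) (t - s) => by linarith [h.2]),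
            indicator_of_notMem (fun h : x ∈ Ioo (t + s) (1:ℝ) => by linarith [h.1])]
          simp
    · simp only [indicator_of_notMem hx, mul_zero, sub_zero]
      simp only [indicator_apply]
      simp [hx]
  simp_rw [e0]
  have hb : ∀ S : Set ℝ, MeasurableSet S → (∀ x ∈ S, s ≤ |x - t|) → 
    Integrable (S.indicator (fun x : ℝ => A.indicator (fun _ => (1:ℂ)) x / ((x : ℂ) - (t : ℂ)))) := by
    intro S hS hSs
    have : S.indicator (fun x : ℝ => A.indicator (fun _ => (1:ℂ)) x / ((x : ℂ) - (t : ℂ))) = 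
      A.indicator (S.indicator (fun x : ℝ => 1 / ((x : ℂ) - (t : ℂ)))) := by
      ext x
      by_cases hx : x ∈ A <;> by_cases hx2 : x ∈ S <;> simp [hx, hx2]
    rw [this]
    refine (integrable_indicator_iff hA).2 ?_
    refine Integrable.of_bound (Measurable.aestronglyMeasurable (Measurable.indicator (by fun_prop) hS)) (1/s) 
      (Eventually.of_forall fun x => ?_)
    by_cases hx2 : x ∈ S
    · rw [indicator_of_mem hx2, norm_div, norm_one, ← Complex.ofReal_sub, Complex.norm_real, Real.norm_eq_abs]
      have := hSs x hx2
      gcongr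
    · rw [indicator_of_notMem hx2, norm_zero]; positivity
  rw [integral_add (hb _ measurableSet_Ioo ?_) (hb _ measurableSet_Ioo ?_), 
    integral_indicator measurableSet_Ioo, integral_indicator measurableSet_Ioo]
  · intro x hx
    rw [le_abs]; right; linarith [hx.2]
  · intro x hx
    rw [le_abs]; left; linarith [hx.1]

lemma fht_eq (A : Set ℝ) (hA : MeasurableSet A) (hA' : A ⊆ Ioo (-1:ℝ) 1) (t : ℝ) (g : ℂ)
    (ht : Tendsto (fun s : ℝ => ∫⁻ x, ENNReal.ofReal (s / ((x - t)^2 + s^2) * ‖A.indicator (fun _ => (1:ℂ)) x - A.indicator (fun _ => (1:ℂ)) t‖)) (𝓝[>] 0) (𝓝 0))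
    (hg : Tendsto (fun s : ℝ => ctr A (t + s * Complex.I)) (𝓝[>] 0) (𝓝 g)) :
    fht (A.indicator fun _ => (1:ℂ)) t = Complex.I * (g - A.indicator (fun _ => (1:ℂ)) t) := by
  have h1 := ctr_re_tendsto A hA hA' t ht
  have h2 := kernel_limit _ (ind_memLp A hA hA') t (dker t) 0
    (fun s hs x => dker_bound t s x hs)
    (fun s hs => ker_ind_int A hA _ (dker_int t s hs).1)
    (fun s hs => dker_int t s hs) ht
  have h3 := ((hg.sub h1).const_mul Complex.I).sub (h2.const_mul ((Real.pi:ℂ)⁻¹))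
  unfold fht
  apply Tendsto.limUnder_eq
  have e : Complex.I * (g - A.indicator (fun _ => (1:ℂ)) t) - 
    ((Real.pi:ℂ)⁻¹ * (((0:ℝ):ℂ) * A.indicator (fun _ => (1:ℂ)) t)) = Complex.I * (g - A.indicator (fun _ => (1:ℂ)) t) := by
    simp
  rw [e] at h3
  refine h3.congr' ?_
  filter_upwards [self_mem_nhdsWithin] with s hs
  have hs : (0:ℝ) < s := hs
  rw [trunc_eq A hA hA' t s hs, ctr_split A hA hA' t s hs]
  linear_combination (-((Real.pi:ℂ)⁻¹ * (∫ x, (((x - t) / ((x - t)^2 + s^2) : ℝ) : ℂ) * A.indicator (fun _ => (1:ℂ)) x))) * Complex.I_sq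


lemma gy_props (A : Set ℝ) (hA : MeasurableSet A) (hA' : A ⊆ Ioo (-1:ℝ) 1) (y : ℝ) (hy : 0 < y) :
    IsOpen {w : ℂ | -y < w.im} ∧ (∀ w : ℂ, 0 ≤ w.im → w ∈ {w : ℂ | -y < w.im}) ∧ 
    DifferentiableOn ℂ (fun w => ctr A (w + y * Complex.I)) {w : ℂ | -y < w.im} ∧
    ∃ B : ℝ, 0 ≤ B ∧ ∀ w : ℂ, 0 ≤ w.im → ‖ctr A (w + y * Complex.I)‖ ≤ B / (1 + ‖w‖) := by
  refine ⟨isOpen_lt continuous_const Complex.continuous_im, 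
    fun w hw => by simp only [mem_ofPred_eq]; linarith, ?_, ?_⟩
  · refine (ctr_diff A hA hA').comp (by fun_prop) ?_
    intro w hw
    simp only [mem_ofPred_eq] at hw ⊢
    simp
    linarith
  · obtain ⟨B, hB⟩ := ctr_bound A hA hA' y hy
    have hB0 : 0 ≤ B := by
      have := (norm_nonneg _).trans (hB (y * Complex.I) (by simp))
      by_contra hn
      have : B / (1 + ‖(y:ℂ) * Complex.I‖) < 0 := div_neg_of_neg_of_pos (by linarith) (by positivity)
      linarith
    refine ⟨B * (1 + y), by positivity, fun w hw => (hB _ (by simp [hw])).trans ?_⟩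
    have h1 : ‖w‖ ≤ ‖w + y * Complex.I‖ + y := by
      have := norm_sub_le (w + y * Complex.I) (y * Complex.I)
      rw [add_sub_cancel_right] at this
      have h2 : ‖(y:ℂ) * Complex.I‖ = y := by simp [abs_of_pos hy]
      linarith
    rw [div_le_div_iff₀ (by positivity) (by positivity), mul_assoc]
    gcongr
    nlinarith [norm_nonneg (w + y * Complex.I)]

lemma gy_cont (A : Set ℝ) (hA : MeasurableSet A) (hA' : A ⊆ Ioo (-1:ℝ) 1) (y : ℝ) (hy : 0 < y) :
    Continuous (fun t : ℝ => ctr A (t + y * Complex.I)) := by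
  obtain ⟨_, h2, h3, _⟩ := gy_props A hA hA' y hy
  exact h3.continuousOn.comp_continuous Complex.continuous_ofReal (fun t => h2 _ (by simp))

lemma gy_memLp (A : Set ℝ) (hA : MeasurableSet A) (hA' : A ⊆ Ioo (-1:ℝ) 1) (y : ℝ) (hy : 0 < y) :
    MemLp (fun t : ℝ => ctr A (t + y * Complex.I)) 2 := by
  obtain ⟨_, h2, h3, B, hB0, hB⟩ := gy_props A hA hA' y hy
  have hc := gy_cont A hA hA' y hy
  rw [memLp_two_iff_integrable_sq_norm hc.aestronglyMeasurable]
  refine (sq_decay_integrable.const_mul (B^2)).mono' (hc.norm.pow 2).aestronglyMeasurable (Eventually.of_forall fun t => ?_)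
  have h4 := hB t (by simp)
  rw [Complex.norm_real, Real.norm_eq_abs] at h4
  rw [Real.norm_of_nonneg (by positivity), ← inv_pow, ← mul_pow, ← div_eq_mul_inv]
  gcongr

lemma gy_cube (A : Set ℝ) (hA : MeasurableSet A) (hA' : A ⊆ Ioo (-1:ℝ) 1) (y : ℝ) (hy : 0 < y) :
    Integrable (fun t : ℝ => (ctr A (t + y * Complex.I))^3) ∧ 
    ∫ t : ℝ, (ctr A (t + y * Complex.I))^3 = 0 := by
  obtain ⟨_, h2, h3, B, hB0, hB⟩ := gy_props A hA hA' y hy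
  have hc := gy_cont A hA hA' y hy
  have hbd : ∀ w : ℂ, 0 ≤ w.im → ‖(ctr A (w + y * Complex.I))^3‖ ≤ B^3 * ((1 + ‖w‖)^2)⁻¹ := by
    intro w hw
    have h4 := hB w hw
    rw [norm_pow]
    calc ‖ctr A (w + y * Complex.I)‖^3 ≤ (B / (1 + ‖w‖))^3 := by gcongr
      _ = B^3 * ((1 + ‖w‖)^3)⁻¹ := by rw [div_pow]; rfl
      _ ≤ _ := by
        gcongr
        · linarith [norm_nonneg w]
        · norm_num
  have hi : Integrable (fun t : ℝ => (ctr A (t + y * Complex.I))^3) := by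
    refine (sq_decay_integrable.const_mul (B^3)).mono' (hc.pow 3).aestronglyMeasurable (Eventually.of_forall fun t => ?_)
    have := hbd t (by simp)
    rwa [Complex.norm_real, Real.norm_eq_abs] at this
  refine ⟨hi, ?_⟩
  refine contour_zero (fun w => (ctr A (w + y * Complex.I))^3) _ h2 (h3.pow 3) (B^3) 1 ?_ hi
  intro w hw hw1
  refine (hbd w hw).trans ?_
  rw [div_eq_mul_inv]
  gcongr
  linarith

lemma gy_poisson (A : Set ℝ) (hA : MeasurableSet A) (hA' : A ⊆ Ioo (-1:ℝ) 1) (y : ℝ) (hy : 0 < y) 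
    (a s : ℝ) (hs : 0 < s) :
    ∫ t : ℝ, ctr A (t + y * Complex.I) * ((s / ((t - a)^2 + s^2) : ℝ) : ℂ) = 
      Real.pi * ctr A (a + ((s + y : ℝ) : ℂ) * Complex.I) := by
  obtain ⟨h1, h2, h3, B, hB0, hB⟩ := gy_props A hA hA' y hy
  have := (poisson_G _ _ h1 h2 h3 B hB a s hs).2
  rw [this]
  congr 2
  push_cast
  ring

lemma gy_inner (A : Set ℝ) (hA : MeasurableSet A) (hA' : A ⊆ Ioo (-1:ℝ) 1) (y y' : ℝ) (hy : 0 < y) 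
    (hy' : 0 < y') :
    ∫ t : ℝ, ctr A (t + y * Complex.I) * (starRingEnd ℂ) (ctr A (t + y' * Complex.I)) = 
      2 * ∫ x in A, ctr A (x + ((y + y' : ℝ) : ℂ) * Complex.I) := by
  obtain ⟨h1, h2, h3, B, hB0, hB⟩ := gy_props A hA hA' y hy
  have hfin : IsFiniteMeasure (volume.restrict A) := ⟨by simpa using volA_lt A hA'⟩
  have hc := gy_cont A hA hA' y hy
  have e : ∀ t : ℝ, ctr A (t + y * Complex.I) * (starRingEnd ℂ) (ctr A (t + y' * Complex.I)) = 
     ∫ x in A, (Real.pi * Complex.I)⁻¹ * (ctr A (t + y * Complex.I) * ((t:ℂ) - (x + y' * Complex.I))⁻¹) := by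
    intro t
    rw [integral_const_mul, integral_const_mul]
    conv_lhs => rw [ctr.eq_1 A (t + y' * Complex.I)]
    rw [map_mul, ← integral_conj]
    have : ∀ x : ℝ, (starRingEnd ℂ) (((x:ℂ) - (t + y' * Complex.I))⁻¹) = -((t:ℂ) - (x + y' * Complex.I))⁻¹ := by
      intro x
      rw [← inv_neg]
      simp
      ring
    simp_rw [this]
    rw [integral_neg]
    simp
    ring
  simp_rw [e]
  rw [integral_integral_swap]
  · have e2 : ∀ x : ℝ, ∫ t : ℝ, (Real.pi * Complex.I)⁻¹ * (ctr A (t + y * Complex.I) * ((t:ℂ) - (x + y' * Complex.I))⁻¹)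
      = 2 * ctr A (x + ((y + y' : ℝ) : ℂ) * Complex.I) := by
      intro x
      rw [integral_const_mul, cauchy_G (fun w => ctr A (w + y * Complex.I)) _ h1 h2 h3 B hB x y' hy']
      have hp : (Real.pi:ℂ) ≠ 0 := by exact_mod_cast Real.pi_ne_zero
      have hI := Complex.I_ne_zero
      have : (x:ℂ) + y' * Complex.I + y * Complex.I = x + ((y + y' : ℝ) : ℂ) * Complex.I := by push_cast; ring
      rw [this]
      field_simp
    simp_rw [e2]
    rw [integral_const_mul]
  · have hdom : Integrable (fun p : ℝ × ℝ => (‖((Real.pi:ℂ) * Complex.I)⁻¹‖ * (B * (y' / (y' + 2))⁻¹) * ((1 + |p.1|)^2)⁻¹) * (1:ℝ)) 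
        ((volume : Measure ℝ).prod (volume.restrict A)) :=
      (sq_decay_integrable.const_mul (‖((Real.pi:ℂ) * Complex.I)⁻¹‖ * (B * (y' / (y' + 2))⁻¹))).mul_prod (integrable_const (1:ℝ))
    refine hdom.mono' ?_ ?_
    · apply Measurable.aestronglyMeasurable
      have h8 : Measurable (fun p : ℝ × ℝ => ctr A (p.1 + y * Complex.I)) := hc.measurable.comp measurable_fst
      have h9 : Measurable (fun p : ℝ × ℝ => ((p.1:ℂ) - (p.2 + y' * Complex.I))⁻¹) := by fun_prop
      exact (h8.mul h9).const_mul _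
    · have : ∀ᵐ p ∂((volume : Measure ℝ).prod (volume.restrict A)), p.2 ∈ A := 
        Measure.quasiMeasurePreserving_snd.ae (ae_restrict_mem hA)
      filter_upwards [this] with p hp
      simp only [Function.uncurry]
      rw [norm_mul, norm_mul, mul_one, mul_assoc ‖((Real.pi:ℂ) * Complex.I)⁻¹‖]
      refine mul_le_mul_of_nonneg_left ?_ (norm_nonneg _)
      have h4 := hB p.1 (by simp)
      rw [Complex.norm_real, Real.norm_eq_abs] at h4
      have h5 := dist_lower y' hy' ((p.1:ℂ) + y' * Complex.I) (by simp) p.2 (hA' hp)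
      have h6 : |p.1| ≤ ‖(p.1:ℂ) + y' * Complex.I‖ := by
        have := Complex.abs_re_le_norm ((p.1:ℂ) + y' * Complex.I)
        simpa using this
      have h7 : ‖(p.1:ℂ) - (p.2 + y' * Complex.I)‖ = ‖(p.2:ℂ) - ((p.1:ℂ) + y' * Complex.I)‖ := by
        have : (p.1:ℂ) - (p.2 + y' * Complex.I) = (starRingEnd ℂ) (-((p.2:ℂ) - ((p.1:ℂ) + y' * Complex.I))) := by
          simp; ring
        rw [this, Complex.norm_conj, norm_neg]
      rw [norm_inv, h7]
      calc _ ≤ (B / (1 + |p.1|)) * (y' / (y' + 2) * (1 + |p.1|))⁻¹ := by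
            gcongr
            refine le_trans ?_ h5
            gcongr
        _ = _ := by field_simp

lemma re_int_tendsto (A : Set ℝ) (hA : MeasurableSet A) (hA' : A ⊆ Ioo (-1:ℝ) 1) :
    Tendsto (fun s : ℝ => ∫ x in A, (ctr A (x + (s : ℂ) * Complex.I)).re) (𝓝[>] 0) (𝓝 (volume.real A)) := by
  have hfin : IsFiniteMeasure (volume.restrict A) := ⟨by simpa using volA_lt A hA'⟩
  have e : volume.real A = ∫ x in A, (1:ℝ) := by simp
  rw [e]
  refine tendsto_integral_filter_of_dominated_convergence (fun _ => 1) ?_ ?_ (integrable_const _) ?_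
  · filter_upwards [self_mem_nhdsWithin] with s hs
    exact (Complex.continuous_re.comp (gy_cont A hA hA' s hs)).aestronglyMeasurable
  · filter_upwards [self_mem_nhdsWithin] with s hs
    refine Eventually.of_forall fun x => ?_
    obtain ⟨h1, h2⟩ := ctr_re_mem A hA hA' x s hs
    rw [Real.norm_of_nonneg h1]; exact h2
  · filter_upwards [ae_restrict_mem hA, ae_restrict_of_ae (lebesgue_point_ae _ (ind_memLp A hA hA'))] with t htA ht
    have h1 := (Complex.continuous_re.tendsto _).comp (ctr_re_tendsto A hA hA' t ht)
    rw [indicator_of_mem htA, Complex.one_re] at h1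
    refine h1.congr' ?_
    filter_upwards [self_mem_nhdsWithin] with s hs
    have ee : ∀ φ : ℝ → ℝ, ∫ x, (φ x : ℂ) * A.indicator (fun _ => (1:ℂ)) x = ((∫ x in A, φ x : ℝ) : ℂ) := by
      intro φ
      rw [← integral_complex_ofReal, ← integral_indicator hA]
      congr 1
      ext x
      by_cases hx : x ∈ A <;> simp [hx]
    rw [ctr_re A hA hA' t s hs, Function.comp, ee, ← Complex.ofReal_inv, ← Complex.ofReal_mul, Complex.ofReal_re]


lemma lp_norm_sq (F : Lp ℂ 2 (volume : Measure ℝ)) : ‖F‖^2 = ∫ t, ‖F t‖^2 := by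
  have h1 : ((‖F‖^2 : ℝ) : ℂ) = inner ℂ F F := by
    rw [inner_self_eq_norm_sq_to_K]; norm_cast
  rw [L2.inner_def] at h1
  have : ∀ t, inner ℂ (F t) (F t) = ((‖F t‖^2 : ℝ) : ℂ) := by
    intro t
    rw [inner_self_eq_norm_sq_to_K]; norm_cast
  simp_rw [this] at h1
  rw [integral_complex_ofReal] at h1
  exact_mod_cast h1

lemma poisson_memLp (a s : ℝ) (hs : 0 < s) : MemLp (fun t : ℝ => ((s / ((t - a)^2 + s^2) : ℝ) : ℂ)) 2 := by
  have hm : Measurable (fun t : ℝ => ((s / ((t - a)^2 + s^2) : ℝ) : ℂ)) := by fun_prop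
  rw [memLp_two_iff_integrable_sq_norm hm.aestronglyMeasurable]
  refine ((poisson_int a s hs).1.const_mul (1/s)).mono' (hm.norm.pow_const 2).aestronglyMeasurable
    (Eventually.of_forall fun t => ?_)
  have h0 : 0 ≤ s / ((t - a)^2 + s^2) := by positivity
  rw [Real.norm_of_nonneg (by positivity), Complex.norm_real, Real.norm_of_nonneg h0, sq]
  refine mul_le_mul_of_nonneg_right ?_ h0
  rw [div_le_div_iff₀ (by positivity) hs]
  nlinarith [sq_nonneg (t - a)]

lemma gy_inner_re (A : Set ℝ) (hA : MeasurableSet A) (hA' : A ⊆ Ioo (-1:ℝ) 1) (y y' : ℝ) (hy : 0 < y) 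
    (hy' : 0 < y') :
    (inner ℂ ((gy_memLp A hA hA' y' hy').toLp) ((gy_memLp A hA hA' y hy).toLp)).re = 
      2 * ∫ x in A, (ctr A (x + ((y + y' : ℝ) : ℂ) * Complex.I)).re := by
  have hfin : IsFiniteMeasure (volume.restrict A) := ⟨by simpa using volA_lt A hA'⟩
  have hi : Integrable (fun x : ℝ => ctr A (x + ((y + y' : ℝ) : ℂ) * Complex.I)) (volume.restrict A) :=
    ((gy_memLp A hA hA' (y + y') (by positivity)).restrict A).integrable (by norm_num)
  rw [L2.inner_def]
  have : ∫ t, inner ℂ ((gy_memLp A hA hA' y' hy').toLp _ t) ((gy_memLp A hA hA' y hy).toLp _ t) = 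
    ∫ t : ℝ, ctr A (t + y * Complex.I) * (starRingEnd ℂ) (ctr A (t + y' * Complex.I)) := by
    apply integral_congr_ae
    filter_upwards [(gy_memLp A hA hA' y' hy').coeFn_toLp, (gy_memLp A hA hA' y hy).coeFn_toLp] with t h1 h2
    rw [h1, h2, RCLike.inner_apply]
  rw [this, gy_inner A hA hA' y y' hy hy']
  have h2 := integral_re hi
  simp only [RCLike.re_to_complex] at h2
  rw [h2]
  simp

lemma l2_limit (A : Set ℝ) (hA : MeasurableSet A) (hA' : A ⊆ Ioo (-1:ℝ) 1) (y : ℕ → ℝ) (hy : ∀ n, 0 < y n)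
    (hy0 : Tendsto y atTop (𝓝[>] 0)) :
    ∃ g : ℝ → ℂ, MemLp g 2 ∧ 
      Tendsto (fun n => ∫ t : ℝ, ‖ctr A (t + y n * Complex.I) - g t‖^2) atTop (𝓝 0) ∧
      ∀ a s : ℝ, 0 < s → ∫ t : ℝ, ((s / ((t - a)^2 + s^2) : ℝ) : ℂ) * g t = Real.pi * ctr A (a + s * Complex.I) := by
  set c : ℕ → Lp ℂ 2 (volume : Measure ℝ) := fun n => (gy_memLp A hA hA' (y n) (hy n)).toLp with hc
  set J : ℝ → ℝ := fun s => ∫ x in A, (ctr A (x + (s : ℂ) * Complex.I)).re with hJ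
  have hJt : Tendsto J (𝓝[>] 0) (𝓝 (volume.real A)) := re_int_tendsto A hA hA'
  have hin : ∀ m n, (inner ℂ (c m) (c n)).re = 2 * J (y n + y m) := fun m n => 
    gy_inner_re A hA hA' (y n) (y m) (hy n) (hy m)
  have hns : ∀ m n, ‖c m - c n‖^2 = 2 * J (y m + y m) - 4 * J (y n + y m) + 2 * J (y n + y n) := by
    intro m n
    have h1 := norm_sub_sq (𝕜 := ℂ) (c m) (c n)
    have h2 := inner_self_eq_norm_sq (𝕜 := ℂ) (c m)
    have h3 := inner_self_eq_norm_sq (𝕜 := ℂ) (c n)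
    simp only [RCLike.re_to_complex, hin] at h1 h2 h3
    rw [h1, ← h2, ← h3]; ring
  have hcs : CauchySeq c := by
    rw [Metric.cauchySeq_iff]
    intro ε hε
    have h1 : ∀ᶠ s in 𝓝[>] (0:ℝ), |J s - volume.real A| < ε^2/16 := by
      have := hJt.eventually (Metric.ball_mem_nhds _ (show 0 < ε^2/16 by positivity))
      simpa [Real.dist_eq] using this
    rw [eventually_nhdsWithin_iff, Metric.eventually_nhds_iff] at h1
    obtain ⟨δ, hδ, h1⟩ := h1
    have h2 : ∀ᶠ n in atTop, y n < δ / 2 := 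
      (tendsto_nhds_of_tendsto_nhdsWithin hy0).eventually (gt_mem_nhds (by positivity))
    obtain ⟨N, hN⟩ := eventually_atTop.1 h2
    refine ⟨N, fun m hm n hn => ?_⟩
    have hJ3 : ∀ m ≥ N, ∀ n ≥ N, |J (y n + y m) - volume.real A| < ε^2/16 := by
      intro m hm n hn
      have h3 := hN m hm
      have h4 := hN n hn
      have h5 := hy m
      have h6 := hy n
      refine h1 ?_ (show (0:ℝ) < y n + y m by positivity)
      rw [Real.dist_eq, sub_zero, abs_of_pos (by positivity)]
      linarith
    have k1 := abs_lt.1 (hJ3 m hm m hm)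
    have k2 := abs_lt.1 (hJ3 m hm n hn)
    have k3 := abs_lt.1 (hJ3 n hn n hn)
    rw [dist_eq_norm]
    refine lt_of_pow_lt_pow_left₀ 2 hε.le ?_
    rw [hns]
    have : 0 < ε^2 := by positivity
    linarith [k1.1, k1.2, k2.1, k2.2, k3.1, k3.2]
  obtain ⟨G, hG⟩ := cauchySeq_tendsto_of_complete hcs
  refine ⟨G, Lp.memLp G, ?_, ?_⟩
  · have h1 : Tendsto (fun n => ‖c n - G‖^2) atTop (𝓝 0) := by
      have := (tendsto_iff_norm_sub_tendsto_zero.1 hG).pow 2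
      simpa using this
    refine h1.congr fun n => ?_
    rw [lp_norm_sq]
    apply integral_congr_ae
    filter_upwards [Lp.coeFn_sub (c n) G, (gy_memLp A hA hA' (y n) (hy n)).coeFn_toLp] with t h1 h2
    rw [h1, Pi.sub_apply, h2]
  · intro a s hs
    set P := (poisson_memLp a s hs).toLp with hP
    have hPc := (poisson_memLp a s hs).coeFn_toLp
    have h1 : Tendsto (fun n => inner ℂ P (c n)) atTop (𝓝 (inner ℂ P G)) := 
      tendsto_const_nhds.inner hG
    have h2 : inner ℂ P G = ∫ t : ℝ, ((s / ((t - a)^2 + s^2) : ℝ) : ℂ) * G t := by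
      rw [L2.inner_def]
      apply integral_congr_ae
      filter_upwards [hPc] with t ht
      rw [hP, ht, RCLike.inner_apply, Complex.conj_ofReal, mul_comm]
    have h3 : ∀ n, inner ℂ P (c n) = Real.pi * ctr A (a + ((s + y n : ℝ) : ℂ) * Complex.I) := by
      intro n
      rw [← gy_poisson A hA hA' (y n) (hy n) a s hs, L2.inner_def]
      apply integral_congr_ae
      filter_upwards [hPc, (gy_memLp A hA hA' (y n) (hy n)).coeFn_toLp] with t ht ht2
      rw [hP, ht, RCLike.inner_apply, Complex.conj_ofReal]
      simp only [hc]
      rw [ht2]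
    simp_rw [h3] at h1
    rw [← h2]
    refine tendsto_nhds_unique h1 ?_
    refine Tendsto.const_mul _ ?_
    have hd : ContinuousAt (ctr A) (a + (s:ℂ) * Complex.I) := 
      ((ctr_diff A hA hA').differentiableAt ((isOpen_lt continuous_const Complex.continuous_im).mem_nhds 
        (by simp [hs]))).continuousAt
    refine hd.tendsto.comp ?_
    have h5 : Tendsto y atTop (𝓝 0) := tendsto_nhds_of_tendsto_nhdsWithin hy0
    have h6 : Tendsto (fun n => (a:ℂ) + ((s + y n : ℝ) : ℂ) * Complex.I) atTop 
      (𝓝 ((a:ℂ) + ((s + 0 : ℝ) : ℂ) * Complex.I)) := by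
      refine tendsto_const_nhds.add (Tendsto.mul_const _ ?_)
      exact (Complex.continuous_ofReal.tendsto _).comp (tendsto_const_nhds.add h5)
    rwa [add_zero] at h6

lemma ae_limit (A : Set ℝ) (hA : MeasurableSet A) (hA' : A ⊆ Ioo (-1:ℝ) 1) (g : ℝ → ℂ) (hg : MemLp g 2)
    (hp : ∀ a s : ℝ, 0 < s → ∫ t : ℝ, ((s / ((t - a)^2 + s^2) : ℝ) : ℂ) * g t = Real.pi * ctr A (a + s * Complex.I)) :
    ∀ᵐ t : ℝ, Tendsto (fun s : ℝ => ctr A (t + s * Complex.I)) (𝓝[>] 0) (𝓝 (g t)) := by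
  filter_upwards [lebesgue_point_ae g hg] with t ht
  have := kernel_limit g hg t (fun s x => s / ((x - t)^2 + s^2)) Real.pi
    (fun s hs x => by rw [abs_of_nonneg (by positivity)])
    (fun s hs => (poisson_memLp t s hs).integrable_mul hg)
    (fun s hs => poisson_int t s hs) ht
  have h2 := this.const_mul ((Real.pi:ℂ)⁻¹)
  have hp0 : (Real.pi:ℂ) ≠ 0 := by exact_mod_cast Real.pi_ne_zero
  rw [inv_mul_cancel_left₀ hp0] at h2
  refine h2.congr' ?_
  filter_upwards [self_mem_nhdsWithin] with s hs
  rw [hp t s hs, inv_mul_cancel_left₀ hp0]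

lemma main_real (A : Set ℝ) (hA : MeasurableSet A) (hA' : A ⊆ Ioo (-1:ℝ) 1) :
    ∃ h : ℝ → ℝ, MemLp h 2 ∧ (∀ᵐ t : ℝ, ‖fht (A.indicator fun _ => (1:ℂ)) t‖ = ‖h t‖) ∧ 
      volume.real A ≤ 3 * ∫ t in A, (h t)^2 := by
  set y : ℕ → ℝ := fun n => 1 / ((n:ℝ) + 1) with hydef
  have hy : ∀ n, 0 < y n := fun n => by simp only [hydef]; positivity
  have hy0 : Tendsto y atTop (𝓝[>] 0) := 
    tendsto_nhdsWithin_iff.2 ⟨tendsto_one_div_add_atTop_nhds_zero_nat, Eventually.of_forall hy⟩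
  obtain ⟨g, hg, hgn, hgp⟩ := l2_limit A hA hA' y hy hy0
  have hlim := ae_limit A hA hA' g hg hgp
  have hfin : IsFiniteMeasure (volume.restrict A) := ⟨by simpa using volA_lt A hA'⟩
  have hleb := lebesgue_point_ae _ (ind_memLp A hA hA')
  have hre : ∀ᵐ t : ℝ, ((g t).re : ℂ) = A.indicator (fun _ => (1:ℂ)) t := by
    filter_upwards [hlim, hleb] with t h1 h2
    have h3 := ctr_re_tendsto A hA hA' t h2
    have h4 := (Complex.continuous_ofReal.tendsto _).comp ((Complex.continuous_re.tendsto _).comp h1)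
    refine tendsto_nhds_unique h4 (h3.congr' ?_)
    filter_upwards [self_mem_nhdsWithin] with s hs
    have ee : ∀ φ : ℝ → ℝ, ∫ x, (φ x : ℂ) * A.indicator (fun _ => (1:ℂ)) x = ((∫ x in A, φ x : ℝ) : ℂ) := by
      intro φ
      rw [← integral_complex_ofReal, ← integral_indicator hA]
      congr 1
      ext x
      by_cases hx : x ∈ A <;> simp [hx]
    simp only [Function.comp]
    rw [ctr_re A hA hA' t s hs, ee, ← Complex.ofReal_inv, ← Complex.ofReal_mul]
  have hre2 : ∀ᵐ t : ℝ, (g t).re = A.indicator (fun _ => (1:ℝ)) t := by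
    filter_upwards [hre] with t ht
    have := congrArg Complex.re ht
    rw [Complex.ofReal_re] at this
    rw [this]
    by_cases hx : t ∈ A <;> simp [hx]
  have hhm : MemLp (fun t => (g t).im) 2 := hg.im
  refine ⟨fun t => (g t).im, hhm, ?_, ?_⟩
  · filter_upwards [hlim, hleb, hre] with t h1 h2 h3
    rw [fht_eq A hA hA' t (g t) h2 h1, ← h3, norm_mul, Complex.norm_I, one_mul]
    have : g t - (g t).re = (g t).im * Complex.I := by
      apply Complex.ext <;> simp
    rw [this, norm_mul, Complex.norm_I, mul_one, Complex.norm_real]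
  set u : ℕ → ℝ → ℝ := fun n t => (ctr A (t + y n * Complex.I)).re with hu
  set v : ℕ → ℝ → ℝ := fun n t => (ctr A (t + y n * Complex.I)).im with hv
  have hu0 : ∀ n t, 0 ≤ u n t := fun n t => (ctr_re_mem A hA hA' t (y n) (hy n)).1
  have hu1 : ∀ n t, u n t ≤ 1 := fun n t => (ctr_re_mem A hA hA' t (y n) (hy n)).2
  have huc : ∀ n, Continuous (u n) := fun n => Complex.continuous_re.comp (gy_cont A hA hA' (y n) (hy n))
  have hvc : ∀ n, Continuous (v n) := fun n => Complex.continuous_im.comp (gy_cont A hA hA' (y n) (hy n))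
  have hu2 : ∀ n, Integrable (fun t => (u n t)^2) := fun n => (gy_memLp A hA hA' (y n) (hy n)).re.integrable_sq
  have hv2 : ∀ n, Integrable (fun t => (v n t)^2) := fun n => (gy_memLp A hA hA' (y n) (hy n)).im.integrable_sq
  have hh2 : Integrable (fun t => (g t).im^2) := hhm.integrable_sq
  have hut : ∀ᵐ t : ℝ, Tendsto (fun n => u n t) atTop (𝓝 (A.indicator (fun _ => (1:ℝ)) t)) := by
    filter_upwards [hlim, hre2] with t h1 h2
    rw [← h2]
    exact (Complex.continuous_re.tendsto _).comp (h1.comp hy0)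
  have hu3 : ∀ n, Integrable (fun t => (u n t)^3) := fun n => by
    refine (hu2 n).mono' ((huc n).pow 3).aestronglyMeasurable (Eventually.of_forall fun t => ?_)
    rw [Real.norm_of_nonneg (pow_nonneg (hu0 n t) 3)]
    exact pow_le_pow_of_le_one (hu0 n t) (hu1 n t) (by norm_num)
  have huv : ∀ n, Integrable (fun t => u n t * (v n t)^2) := fun n => by
    refine (hv2 n).mono' ((huc n).mul ((hvc n).pow 2)).aestronglyMeasurable (Eventually.of_forall fun t => ?_)
    rw [Real.norm_of_nonneg (mul_nonneg (hu0 n t) (sq_nonneg _))]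
    exact mul_le_of_le_one_left (sq_nonneg _) (hu1 n t)
  have huh : ∀ n, Integrable (fun t => u n t * (g t).im^2) := fun n => by
    refine hh2.mono' ((huc n).aestronglyMeasurable.mul hh2.1) (Eventually.of_forall fun t => ?_)
    rw [Real.norm_of_nonneg (mul_nonneg (hu0 n t) (sq_nonneg _))]
    exact mul_le_of_le_one_left (sq_nonneg _) (hu1 n t)
  have hcube : ∀ n, ∫ t, (u n t)^3 = 3 * ∫ t, u n t * (v n t)^2 := by
    intro n
    obtain ⟨h1, h2⟩ := gy_cube A hA hA' (y n) (hy n)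
    have h3 := integral_re h1
    rw [h2] at h3
    simp only [RCLike.re_to_complex, Complex.zero_re] at h3
    have h4 : ∀ t : ℝ, ((ctr A (t + y n * Complex.I))^3).re = (u n t)^3 - 3 * (u n t * (v n t)^2) := by
      intro t
      simp only [hu, hv, pow_succ, pow_zero, one_mul, Complex.mul_re, Complex.mul_im]
      ring
    simp_rw [h4] at h3
    rw [integral_sub (hu3 n) ((huv n).const_mul 3), integral_const_mul] at h3
    linarith
  have hd2 : ∀ n, Integrable (fun t : ℝ => ‖ctr A (t + y n * Complex.I) - g t‖^2) := fun n => 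
    ((gy_memLp A hA hA' (y n) (hy n)).sub hg).integrable_norm_pow (p := 2) (by norm_num)
  set X := ∫ t in A, (g t).im^2 with hX
  have hX0 : 0 ≤ X := integral_nonneg fun t => sq_nonneg _
  have L1 : Tendsto (fun n => ∫ t in A, (u n t)^3) atTop (𝓝 (volume.real A)) := by
    have e : volume.real A = ∫ x in A, (1:ℝ) := by simp
    rw [e]
    refine tendsto_integral_of_dominated_convergence (fun _ => 1) (fun n => ((huc n).pow 3).aestronglyMeasurable)
      (integrable_const _) (fun n => Eventually.of_forall fun t => ?_) ?_
    · rw [Real.norm_of_nonneg (pow_nonneg (hu0 n t) 3)]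
      exact pow_le_one₀ (hu0 n t) (hu1 n t)
    · filter_upwards [ae_restrict_mem hA, ae_restrict_of_ae hut] with t h1 h2
      rw [indicator_of_mem h1] at h2
      simpa using h2.pow 3
  have L2 : Tendsto (fun n => ∫ t, u n t * (g t).im^2) atTop (𝓝 X) := by
    have e : X = ∫ t, A.indicator (fun _ => (1:ℝ)) t * (g t).im^2 := by
      rw [hX, ← integral_indicator hA]
      congr 1
      ext x
      by_cases hx : x ∈ A <;> simp [hx]
    rw [e]
    refine tendsto_integral_of_dominated_convergence _ (fun n => (huh n).1) hh2 
      (fun n => Eventually.of_forall fun t => ?_) ?_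
    · rw [Real.norm_of_nonneg (mul_nonneg (hu0 n t) (sq_nonneg _))]
      exact mul_le_of_le_one_left (sq_nonneg _) (hu1 n t)
    · filter_upwards [hut] with t h2
      exact h2.mul_const _
  have key : ∀ δ > 0, volume.real A ≤ 3 * ((1 + δ) * X + (1 + 1/δ) * 0) := by
    intro δ hδ
    refine le_of_tendsto_of_tendsto' L1 (((L2.const_mul (1 + δ)).add (hgn.const_mul (1 + 1/δ))).const_mul 3) 
      (fun n => ?_)
    have h1 : ∫ t in A, (u n t)^3 ≤ ∫ t, (u n t)^3 := 
      setIntegral_le_integral (hu3 n) (Eventually.of_forall fun t => pow_nonneg (hu0 n t) 3)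
    refine h1.trans ?_
    rw [hcube]
    refine mul_le_mul_of_nonneg_left ?_ (by norm_num)
    rw [← integral_const_mul, ← integral_const_mul, ← integral_add ((huh n).const_mul _) ((hd2 n).const_mul _)]
    refine integral_mono (huv n) (((huh n).const_mul _).add ((hd2 n).const_mul _)) (fun t => ?_)
    show u n t * (v n t)^2 ≤ (1 + δ) * (u n t * (g t).im^2) + (1 + 1/δ) * ‖ctr A (t + y n * Complex.I) - g t‖^2
    have h3 : (v n t - (g t).im)^2 ≤ ‖ctr A (t + y n * Complex.I) - g t‖^2 := by
      have := Complex.abs_im_le_norm (ctr A (t + y n * Complex.I) - g t)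
      rw [Complex.sub_im] at this
      rw [← sq_abs (v n t - (g t).im)]
      gcongr
    have h4 : (v n t)^2 ≤ (1 + δ) * (g t).im^2 + (1 + 1/δ) * (v n t - (g t).im)^2 := by
      set w := v n t - (g t).im with hw
      have : v n t = (g t).im + w := by rw [hw]; ring
      rw [this]
      have h5 : 0 ≤ (δ * (g t).im - w)^2 / δ := by positivity
      have h6 : (δ * (g t).im - w)^2 / δ = δ * (g t).im^2 - 2 * (g t).im * w + 1/δ * w^2 := by
        field_simp
        ring
      nlinarith
    have h7 : u n t * ((1 + 1/δ) * (v n t - (g t).im)^2) ≤ (1 + 1/δ) * (v n t - (g t).im)^2 := 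
      mul_le_of_le_one_left (by positivity) (hu1 n t)
    have h8 := mul_le_mul_of_nonneg_left h4 (hu0 n t)
    have h9 : (1 + 1/δ) * (v n t - (g t).im)^2 ≤ (1 + 1/δ) * ‖ctr A (t + y n * Complex.I) - g t‖^2 := by gcongr
    nlinarith
  have L3 : Tendsto (fun δ : ℝ => 3 * ((1 + δ) * X + (1 + 1/δ) * 0)) (𝓝[>] 0) (𝓝 (3 * ((1 + 0) * X + 0))) := by
    simp only [mul_zero]
    refine Tendsto.mono_left ?_ nhdsWithin_le_nhds
    refine Continuous.tendsto (by fun_prop) _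
  have := ge_of_tendsto L3 (by filter_upwards [self_mem_nhdsWithin] with δ hδ using key δ hδ)
  simpa using this

end Aux

/-- Lemma 5.1: `‖T(χ_A)‖_{L²} ≥ β·|A|^{1/2}` for every Borel set
`A ⊆ (−1,1)`. -/
theorem stmt17 (A : Set ℝ) (hA : MeasurableSet A) (hA' : A ⊆ Ioo (-1:ℝ) 1) :
    ENNReal.ofReal fhtBeta * volume A ^ (1/2 : ℝ)
      ≤ eLpNorm (fht (A.indicator fun _ => (1:ℂ))) 2 volIoo := by
  obtain ⟨h, hh, hnorm, hle⟩ := main_real A hA hA'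
  have hfin : volume A ≠ ⊤ := (volA_lt A hA').ne
  have hb : fhtBeta = Real.sqrt (1/3) := by unfold fhtBeta; rw [beta_int]
  have h1 : eLpNorm h 2 (volume.restrict A) ≤
      eLpNorm (fht (A.indicator fun _ => (1:ℂ))) 2 volIoo := by
    have e : eLpNorm (fht (A.indicator fun _ => (1:ℂ))) 2 (volume.restrict A) =
        eLpNorm h 2 (volume.restrict A) := eLpNorm_congr_norm_ae (ae_restrict_of_ae hnorm)
    rw [← e]
    exact eLpNorm_mono_measure _ (Measure.restrict_mono hA' le_rfl)
  refine le_trans ?_ h1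
  rw [(hh.restrict A).eLpNorm_eq_integral_rpow_norm (by norm_num) (by norm_num)]
  have hV : volume A = ENNReal.ofReal (volume.real A) := (ofReal_measureReal hfin).symm
  have e2 : ∫ a in A, ‖h a‖ ^ (2:ENNReal).toReal = ∫ t in A, (h t)^2 := by
    congr 1; ext t; simp
  have hX : 0 ≤ ∫ t in A, (h t)^2 := integral_nonneg fun t => sq_nonneg _
  rw [e2, hV, hb, ENNReal.ofReal_rpow_of_nonneg measureReal_nonneg (by norm_num),
    ← ENNReal.ofReal_mul (by positivity)]
  apply ENNReal.ofReal_le_ofReal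
  have e3 : ((2:ENNReal).toReal)⁻¹ = 1/2 := by norm_num
  rw [e3, ← Real.sqrt_eq_rpow, ← Real.sqrt_eq_rpow, ← Real.sqrt_mul (by norm_num)]
  apply Real.sqrt_le_sqrt
  linarith
end

section
/- Let β := ( ∫_0^∞ 4λ/(e^{πλ}+1) dλ )^{1/2}. For every ℂ-valued Borel simple function φ on (−1,1) one has β · ‖φ‖_{L^2} ≤ sup ‖T(θφ)‖_{L^2}, where the supremum is taken over all measurable functions θ on (−1,1) with |θ| = 1 almost everywhere. -/
open MeasureTheory Filter Set

open scoped FourierTransform SchwartzMap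

lemma fht_aux_adj (f g : ℝ → ℂ) (hf : Integrable f) (hg : Integrable g) :
    ∫ ξ, (𝓕 f ξ) • g ξ = ∫ x, f x • 𝓕 g x := by
  have := VectorFourier.integral_fourierIntegral_smul_eq_flip (μ := volume) (ν := volume)
    (L := innerₗ ℝ) (f := f) (g := g) Real.continuous_fourierChar
    continuous_inner hf hg
  rw [flip_innerₗ] at this
  exact this

lemma fht_aux_adj_inv (f g : ℝ → ℂ) (hf : Integrable f) (hg : Integrable g) :
    ∫ ξ, (𝓕⁻ f ξ) • g ξ = ∫ x, f x • 𝓕⁻ g x := by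
  rw [Real.fourierInv_eq_fourier_comp_neg f, fht_aux_adj _ _ hf.comp_neg hg]
  rw [← integral_neg_eq_self]
  simp [Real.fourierInv_eq_fourier_neg]

lemma fht_fourier_coe (f : ℝ → ℂ) (h1 : Integrable f) (h2 : MemLp f 2 volume) :
    ((𝓕 (h2.toLp f) : Lp ℂ 2 (volume : Measure ℝ)) : ℝ → ℂ) =ᵐ[volume] 𝓕 f := by
  have hcont : Continuous (𝓕 f) :=
    VectorFourier.fourierIntegral_continuous Real.continuous_fourierChar
      continuous_inner h1
  refine ae_eq_of_integral_contDiff_smul_eq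
    ((Lp.memLp _).locallyIntegrable (by norm_num)) hcont.locallyIntegrable ?_
  intro g hg hgs
  have hgs' : HasCompactSupport (fun x => (g x : ℂ)) := hgs.comp_left (g := Complex.ofReal) rfl
  let G : 𝓢(ℝ, ℂ) := hgs'.toSchwartzMap (Complex.ofRealCLM.contDiff.comp hg)
  have hG : ∀ x, G x = (g x : ℂ) := fun x => rfl
  have key := congrArg (fun T => T G) (Lp.fourier_toTemperedDistribution_eq (h2.toLp f))
  simp only [TemperedDistribution.fourier_apply, Lp.toTemperedDistribution_apply] at key
  have e1 : ∫ x, g x • (𝓕 (h2.toLp f) : Lp ℂ 2 (volume : Measure ℝ)) x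
      = ∫ x, G x • (𝓕 (h2.toLp f) : Lp ℂ 2 (volume : Measure ℝ)) x := by simp [hG]
  rw [e1, ← key]
  have e2 : ∫ x, (𝓕 G) x • (h2.toLp f) x = ∫ x, (𝓕 (G : ℝ → ℂ)) x • f x := by
    apply integral_congr_ae
    filter_upwards [h2.coeFn_toLp] with x hx
    rw [hx, SchwartzMap.fourier_coe]
  rw [e2, fht_aux_adj _ _ G.integrable h1]
  simp [hG]

lemma fht_fourierInv_coe (f : ℝ → ℂ) (h1 : Integrable f) (h2 : MemLp f 2 volume) :
    ((𝓕⁻ (h2.toLp f) : Lp ℂ 2 (volume : Measure ℝ)) : ℝ → ℂ) =ᵐ[volume] 𝓕⁻ f := by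
  have hcont : Continuous (𝓕⁻ f) := by
    rw [Real.fourierInv_eq_fourier_comp_neg]
    exact VectorFourier.fourierIntegral_continuous Real.continuous_fourierChar
      continuous_inner h1.comp_neg
  refine ae_eq_of_integral_contDiff_smul_eq
    ((Lp.memLp _).locallyIntegrable (by norm_num)) hcont.locallyIntegrable ?_
  intro g hg hgs
  have hgs' : HasCompactSupport (fun x => (g x : ℂ)) := hgs.comp_left (g := Complex.ofReal) rfl
  let G : 𝓢(ℝ, ℂ) := hgs'.toSchwartzMap (Complex.ofRealCLM.contDiff.comp hg)
  have hG : ∀ x, G x = (g x : ℂ) := fun x => rfl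
  have key := congrArg (fun T => T G) (Lp.fourierInv_toTemperedDistribution_eq (h2.toLp f))
  simp only [TemperedDistribution.fourierInv_apply, Lp.toTemperedDistribution_apply] at key
  have e1 : ∫ x, g x • (𝓕⁻ (h2.toLp f) : Lp ℂ 2 (volume : Measure ℝ)) x
      = ∫ x, G x • (𝓕⁻ (h2.toLp f) : Lp ℂ 2 (volume : Measure ℝ)) x := by simp [hG]
  rw [e1, ← key]
  have e2 : ∫ x, (𝓕⁻ G) x • (h2.toLp f) x = ∫ x, (𝓕⁻ (G : ℝ → ℂ)) x • f x := by
    apply integral_congr_ae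
    filter_upwards [h2.coeFn_toLp] with x hx
    rw [hx, SchwartzMap.fourierInv_coe]
  rw [e2, fht_aux_adj_inv _ _ G.integrable h1]
  simp [hG]

noncomputable def fhtP (a : ℂ) : ℝ → ℂ := (Ioi (0:ℝ)).indicator (fun ξ => Complex.exp (a * ξ))
noncomputable def fhtM (b : ℂ) : ℝ → ℂ := (Iic (0:ℝ)).indicator (fun ξ => Complex.exp (b * ξ))

lemma fhtP_int {a : ℂ} (ha : a.re < 0) : Integrable (fhtP a) :=
  (integrable_indicator_iff measurableSet_Ioi).2 (integrableOn_exp_mul_complex_Ioi ha 0)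

lemma fhtM_int {b : ℂ} (hb : 0 < b.re) : Integrable (fhtM b) :=
  (integrable_indicator_iff measurableSet_Iic).2 (integrableOn_exp_mul_complex_Iic hb 0)

lemma fht_memLp_two_of_bdd {f : ℝ → ℂ} {C : ℝ} {μ : Measure ℝ}
    (hf : Integrable f μ) (h : ∀ x, ‖f x‖ ≤ C) : MemLp f 2 μ := by
  rw [memLp_two_iff_integrable_sq_norm hf.1]
  refine (hf.norm.const_mul C).mono' (hf.1.norm.pow 2) (Eventually.of_forall fun x => ?_)
  rw [Real.norm_of_nonneg (by positivity), pow_two]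
  exact mul_le_mul_of_nonneg_right (h x) (norm_nonneg _)

lemma fhtP_memLp {a : ℂ} (ha : a.re < 0) : MemLp (fhtP a) 2 volume := by
  refine fht_memLp_two_of_bdd (C := 1) (fhtP_int ha) fun x => ?_
  unfold fhtP
  by_cases hx : x ∈ Ioi (0:ℝ)
  · rw [indicator_of_mem hx, Complex.norm_exp]
    simp only [Complex.mul_re, Complex.ofReal_re, Complex.ofReal_im, mul_zero, sub_zero]
    exact Real.exp_le_one_iff.2 (mul_nonpos_of_nonpos_of_nonneg ha.le (le_of_lt hx))
  · simp [indicator_of_notMem hx]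

lemma fhtM_memLp {b : ℂ} (hb : 0 < b.re) : MemLp (fhtM b) 2 volume := by
  refine fht_memLp_two_of_bdd (C := 1) (fhtM_int hb) fun x => ?_
  unfold fhtM
  by_cases hx : x ∈ Iic (0:ℝ)
  · rw [indicator_of_mem hx, Complex.norm_exp]
    simp only [Complex.mul_re, Complex.ofReal_re, Complex.ofReal_im, mul_zero, sub_zero]
    exact Real.exp_le_one_iff.2 (mul_nonpos_of_nonneg_of_nonpos hb.le hx)
  · simp [indicator_of_notMem hx]

lemma fhtP_fourier {a : ℂ} (ha : a.re < 0) (x : ℝ) :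
    𝓕 (fhtP a) x = -1 / (a - 2 * Real.pi * x * Complex.I) := by
  rw [Real.fourier_eq']
  have : ∀ ξ : ℝ, Complex.exp (((-2 * Real.pi * inner ℝ ξ x : ℝ) : ℂ) * Complex.I) • fhtP a ξ
      = fhtP (a - 2 * Real.pi * x * Complex.I) ξ := by
    intro ξ
    unfold fhtP
    by_cases hx : ξ ∈ Ioi (0:ℝ)
    · rw [indicator_of_mem hx, indicator_of_mem hx, smul_eq_mul, ← Complex.exp_add]
      congr 1
      simp
      ring
    · simp [indicator_of_notMem hx]
  simp_rw [this]
  unfold fhtP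
  rw [integral_indicator measurableSet_Ioi, integral_exp_mul_complex_Ioi (by simpa using ha)]
  simp

lemma fhtM_fourier {a : ℂ} (ha : 0 < a.re) (x : ℝ) :
    𝓕 (fhtM a) x = 1 / (a - 2 * Real.pi * x * Complex.I) := by
  rw [Real.fourier_eq']
  have : ∀ ξ : ℝ, Complex.exp (((-2 * Real.pi * inner ℝ ξ x : ℝ) : ℂ) * Complex.I) • fhtM a ξ
      = fhtM (a - 2 * Real.pi * x * Complex.I) ξ := by
    intro ξ
    unfold fhtM
    by_cases hx : ξ ∈ Iic (0:ℝ)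
    · rw [indicator_of_mem hx, indicator_of_mem hx, smul_eq_mul, ← Complex.exp_add]
      congr 1
      simp
      ring
    · simp [indicator_of_notMem hx]
  simp_rw [this]
  unfold fhtM
  rw [integral_indicator measurableSet_Iic, integral_exp_mul_complex_Iic (by simpa using ha)]
  simp

/-- Indicator of the positive half line applied to an `L²` function. -/
noncomputable def fhtCut (G : Lp ℂ 2 (volume : Measure ℝ)) : Lp ℂ 2 (volume : Measure ℝ) :=
  ((Lp.memLp G).indicator (measurableSet_Ioi (a := (0:ℝ)))).toLp _

lemma fhtCut_coe (G : Lp ℂ 2 (volume : Measure ℝ)) :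
    (fhtCut G : ℝ → ℂ) =ᵐ[volume] (Ioi (0:ℝ)).indicator G :=
  MemLp.coeFn_toLp _

/-- Projection to positive frequencies. -/
noncomputable def fhtN (F : Lp ℂ 2 (volume : Measure ℝ)) : Lp ℂ 2 (volume : Measure ℝ) :=
  𝓕 (fhtCut (𝓕⁻ F))


lemma fht_inner1 (G F : Lp ℂ 2 (volume : Measure ℝ)) :
    inner ℂ (𝓕 G) (fhtN F) = inner ℂ G (fhtCut (𝓕⁻ F)) :=
  Lp.inner_fourier_eq _ _

lemma fht_inner2 (G F : Lp ℂ 2 (volume : Measure ℝ)) :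
    inner ℂ (𝓕 G) F = inner ℂ G (𝓕⁻ F) := by
  have hF : F = 𝓕 (𝓕⁻ F) := (FourierTransform.fourier_fourierInv_eq F).symm
  have := Lp.inner_fourier_eq G (𝓕⁻ F)
  rw [← hF] at this
  exact this

lemma fht_ne (u y : ℝ) (hy : y ≠ 0) : (u:ℂ) + y * Complex.I ≠ 0 := by
  intro h
  have := congrArg Complex.im h
  simp at this
  exact hy this

lemma fht_alg1 (w : ℂ) (hw : w ≠ 0) :
    1 / ((2 * Real.pi) * (-Complex.I) * w) = Complex.I / (2 * Real.pi) * (1 / w) := by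
  have hpc : (Real.pi : ℂ) ≠ 0 := by exact_mod_cast Real.pi_ne_zero
  have hI := Complex.I_ne_zero
  rw [div_mul_div_comm, div_eq_div_iff (by simp [hw, hpc]) (by simp [hw, hpc])]
  linear_combination (2 * Real.pi * w) * Complex.I_sq

lemma fht_fact (u y : ℝ) : (u:ℂ)^2 + y^2 = ((u:ℂ) + y * Complex.I) * ((u:ℂ) + (-y : ℝ) * Complex.I) := by
  push_cast
  linear_combination ((y:ℂ)^2) * Complex.I_sq

lemma fht_alg2 (u y : ℝ) (hy : 0 < y) :
    -(Complex.I / (2 * Real.pi) * (1 / ((u:ℂ) + (-y : ℝ) * Complex.I)))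
        + Complex.I / (2 * Real.pi) * (1 / ((u:ℂ) + y * Complex.I))
        = (((Real.pi)⁻¹ * (y / (u^2 + y^2)) : ℝ) : ℂ) := by
  have hpc : (Real.pi : ℂ) ≠ 0 := by exact_mod_cast Real.pi_ne_zero
  have h1 := fht_ne u y hy.ne'
  have h2 := fht_ne u (-y) (by simpa using hy.ne')
  have e := fht_fact u y
  have key : 1 / ((u:ℂ) + y * Complex.I) - 1 / ((u:ℂ) + (-y : ℝ) * Complex.I)
     = (-2 * y * Complex.I) / ((u:ℂ)^2 + y^2) := by
    rw [e, div_sub_div _ _ h1 h2]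
    congr 1
    push_cast
    ring
  have : -(Complex.I / (2 * Real.pi) * (1 / ((u:ℂ) + (-y : ℝ) * Complex.I)))
        + Complex.I / (2 * Real.pi) * (1 / ((u:ℂ) + y * Complex.I))
     = Complex.I / (2 * Real.pi) * (1 / ((u:ℂ) + y * Complex.I) - 1 / ((u:ℂ) + (-y : ℝ) * Complex.I)) := by
    ring
  rw [this, key]
  push_cast
  rw [div_mul_div_comm, ← div_eq_inv_mul, div_div, div_eq_div_iff]
  · linear_combination (-2 * (y:ℂ) * ((↑u ^ 2 + ↑y ^ 2) * ↑Real.pi)) * Complex.I_sq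
  · rw [e]; simp only [ne_eq, mul_eq_zero, not_or]; simp [hpc, h1]; simpa using h2
  · rw [e]; simp only [ne_eq, mul_eq_zero, not_or]; simp [hpc, h1]; simpa using h2

lemma fht_fourier_add' {f g : ℝ → ℂ} (hf : Integrable f) (hg : Integrable g) (x : ℝ) :
    𝓕 (f + g) x = 𝓕 f x + 𝓕 g x := by
  have := VectorFourier.fourierIntegral_add (μ := volume)
    (L := innerₗ ℝ) (f := f) (g := g) Real.continuous_fourierChar continuous_inner hf hg
  exact congrFun this.symm x |>.symm

lemma fht_key (F : Lp ℂ 2 (volume : Measure ℝ)) {a b : ℂ}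
    (har : a.re < 0) (hf1m : MemLp (fhtP a + fhtM b) 2 volume) :
    inner ℂ (𝓕 (hf1m.toLp _) : Lp ℂ 2 (volume : Measure ℝ)) (fhtN F)
      = inner ℂ (𝓕 ((fhtP_memLp har).toLp _) : Lp ℂ 2 (volume : Measure ℝ)) F := by
  rw [fht_inner1, fht_inner2]
  generalize (𝓕⁻ F : Lp ℂ 2 (volume : Measure ℝ)) = G
  rw [L2.inner_def, L2.inner_def]
  apply integral_congr_ae
  filter_upwards [hf1m.coeFn_toLp, (fhtP_memLp har).coeFn_toLp, fhtCut_coe G] with x h1 h2 h3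
  rw [h1, h2, h3]
  by_cases hx : x ∈ Ioi (0:ℝ)
  · have hx' : x ∉ Iic (0:ℝ) := by simpa using hx
    simp only [fhtM, Pi.add_apply, indicator_of_mem hx, indicator_of_notMem hx', add_zero]
  · simp only [fhtP, indicator_of_notMem hx, inner_zero_left, inner_zero_right]

lemma fhtN_repr (F : Lp ℂ 2 (volume : Measure ℝ)) (t y : ℝ) (hy : 0 < y) :
    ∫ x, fhtN F x * (((Real.pi)⁻¹ * (y / ((x - t)^2 + y^2)) : ℝ) : ℂ) =
    ∫ x, F x * (Complex.I / (2 * Real.pi) * (1 / (((x - t : ℝ):ℂ) + y * Complex.I))) := by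
  have hpi := Real.pi_pos
  obtain ⟨a, ha⟩ : ∃ a : ℂ, a = 2 * Real.pi * (-y + t * Complex.I) := ⟨_, rfl⟩
  obtain ⟨b, hb⟩ : ∃ b : ℂ, b = 2 * Real.pi * (y + t * Complex.I) := ⟨_, rfl⟩
  have har : a.re < 0 := by
    simp [ha]; positivity
  have hbr : 0 < b.re := by
    simp [hb]; positivity
  have fa : ∀ x : ℝ, -1 / (a - 2 * Real.pi * x * Complex.I) =
      -(Complex.I / (2 * Real.pi) * (1 / (((x - t : ℝ):ℂ) + (-y : ℝ) * Complex.I))) := by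
    intro x
    rw [← fht_alg1 _ (fht_ne _ _ (by simpa using hy.ne')), neg_div]
    congr 2
    rw [ha]; push_cast; linear_combination (-2 * Real.pi * y) * Complex.I_sq
  have fb : ∀ x : ℝ, 1 / (b - 2 * Real.pi * x * Complex.I) =
      Complex.I / (2 * Real.pi) * (1 / (((x - t : ℝ):ℂ) + y * Complex.I)) := by
    intro x
    rw [← fht_alg1 _ (fht_ne _ _ hy.ne')]
    congr 1
    rw [hb]; push_cast; linear_combination (2 * Real.pi * y) * Complex.I_sq
  have hf1i : Integrable (fhtP a + fhtM b) := (fhtP_int har).add (fhtM_int hbr)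
  have hf1m : MemLp (fhtP a + fhtM b) 2 volume := (fhtP_memLp har).add (fhtM_memLp hbr)
  have key := fht_key F har hf1m
  rw [L2.inner_def, L2.inner_def] at key
  have e1 := fht_fourier_coe _ hf1i hf1m
  have e2 := fht_fourier_coe _ (fhtP_int har) (fhtP_memLp har)
  refine Eq.trans ?_ (key.trans ?_)
  · apply integral_congr_ae
    filter_upwards [e1] with x hx
    rw [hx, fht_fourier_add' (fhtP_int har) (fhtM_int hbr), fhtP_fourier har, fhtM_fourier hbr,
      fa, fb, RCLike.inner_apply, fht_alg2 _ _ hy, Complex.conj_ofReal]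
  · apply integral_congr_ae
    filter_upwards [e2] with x hx
    rw [hx, fhtP_fourier har, fa, RCLike.inner_apply]
    congr 1
    have h2 : (starRingEnd ℂ) 2 = 2 := Complex.conj_ofNat 2
    simp [h2]
    ring

lemma fht_dyadic (u y : ℝ) (hy : 0 < y) :
    ∃ k : ℕ, |u| ≤ 2^k * y ∧ y / (u^2 + y^2) ≤ 4 / (4^k * y) := by
  by_cases hu : |u| ≤ y
  · refine ⟨0, by simpa using hu, ?_⟩
    rw [div_le_div_iff₀ (by positivity) (by positivity)]
    nlinarith [sq_nonneg u, sq_nonneg y]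
  · push Not at hu
    obtain ⟨n, h1, h2⟩ := exists_nat_pow_near (x := |u| / y) (y := 2)
      (by rw [le_div_iff₀ hy]; linarith) (by norm_num)
    rw [le_div_iff₀ hy] at h1
    rw [div_lt_iff₀ hy] at h2
    refine ⟨n+1, h2.le, ?_⟩
    have h3 : (2^n * y)^2 ≤ u^2 := by
      rw [← sq_abs u]
      exact pow_le_pow_left₀ (by positivity) h1 2
    have h4 : (4:ℝ)^n = (2^n)^2 := by rw [← pow_mul, mul_comm, pow_mul]; norm_num
    rw [div_le_div_iff₀ (by positivity) (by positivity), pow_succ, h4]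
    nlinarith [sq_nonneg y]

lemma fht_poisson_le (h : ℝ → ENNReal) (hh : AEMeasurable h) (t y : ℝ) (hy : 0 < y) :
    ∫⁻ x, ENNReal.ofReal (y / ((x - t)^2 + y^2)) * h x ≤
      ∑' k : ℕ, ENNReal.ofReal (4 / (4^k * y)) * ∫⁻ x in Metric.closedBall t (2^k * y), h x := by
  have : ∀ k : ℕ, ENNReal.ofReal (4 / (4^k * y)) * ∫⁻ x in Metric.closedBall t (2^k * y), h x
      = ∫⁻ x, ENNReal.ofReal (4 / (4^k * y)) * (Metric.closedBall t (2^k * y)).indicator h x := by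
    intro k
    rw [lintegral_const_mul' _ _ ENNReal.ofReal_ne_top,
      lintegral_indicator Metric.isClosed_closedBall.measurableSet]
  simp_rw [this]
  rw [← lintegral_tsum (fun k =>
    (hh.indicator Metric.isClosed_closedBall.measurableSet).const_mul _)]
  refine lintegral_mono fun x => ?_
  obtain ⟨k, hk1, hk2⟩ := fht_dyadic (x - t) y hy
  refine le_trans ?_ (ENNReal.le_tsum k)
  rw [indicator_of_mem (by simpa [Real.dist_eq] using hk1)]
  gcongr

lemma fht_poisson (g : ℝ → ℂ) (hg : MemLp g 2 volume) : ∀ᵐ t : ℝ,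
    Tendsto (fun y : ℝ => ∫⁻ x, ENNReal.ofReal (y / ((x - t)^2 + y^2)) * ‖g x - g t‖ₑ)
      (nhdsWithin 0 (Ioi 0)) (nhds 0) := by
  have hloc : LocallyIntegrable g volume := hg.locallyIntegrable (by norm_num)
  have hsq : Integrable (fun x => ‖g x‖^2) := (memLp_two_iff_integrable_sq_norm hg.1).1 hg
  filter_upwards [IsUnifLocDoublingMeasure.ae_tendsto_average_norm_sub volume hloc 1] with t ht
  have hM := ht (l := nhdsWithin (0:ℝ) (Ioi 0)) (fun _ => t) (fun r => r) tendsto_id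
    (by filter_upwards [self_mem_nhdsWithin] with r hr
        simpa using le_of_lt hr)
  set M : ℝ → ℝ := fun r => ⨍ x in Metric.closedBall t r, ‖g x - g t‖ with hMdef
  have hInt0 : ∀ r, IntegrableOn (fun x => g x - g t) (Metric.closedBall t r) := by
    intro r
    exact (hloc.integrableOn_isCompact (isCompact_closedBall t r)).sub
      (integrableOn_const (isCompact_closedBall t r).measure_lt_top.ne)
  have hA : ∀ r, 0 < r → ∫ x in Metric.closedBall t r, ‖g x - g t‖ = 2 * r * M r := by
    intro r hr
    simp only [hMdef]
    rw [setAverage_eq, measureReal_def, Real.volume_closedBall,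
      ENNReal.toReal_ofReal (by positivity), smul_eq_mul]
    field_simp
  have hM0 : ∀ r, 0 < r → 0 ≤ M r := by
    intro r hr
    have := hA r hr
    have h0 : 0 ≤ ∫ x in Metric.closedBall t r, ‖g x - g t‖ :=
      integral_nonneg fun _ => norm_nonneg _
    rw [this] at h0
    exact nonneg_of_mul_nonneg_right h0 (by positivity)
  obtain ⟨B, hB⟩ : ∃ B, ∀ r, 0 < r → M r ≤ B := by
    have h1 : ∀ᶠ r in nhdsWithin (0:ℝ) (Ioi 0), M r < 1 := hM.eventually_lt_const one_pos
    obtain ⟨r0, hr0, hr1⟩ := (mem_nhdsGT_iff_exists_Ioo_subset).1 h1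
    have hr0 : 0 < r0 := hr0
    set S := ∫ x, ‖g x‖^2 with hS
    have hS0 : 0 ≤ S := integral_nonneg fun _ => by positivity
    refine ⟨max 1 (1 + ‖g t‖ + S / (2 * r0)), fun r hr => ?_⟩
    by_cases hrr : r < r0
    · exact le_max_of_le_left (hr1 ⟨hr, hrr⟩).le
    push Not at hrr
    refine le_max_of_le_right ?_
    have hb : ∫ x in Metric.closedBall t r, ‖g x - g t‖ ≤ (1 + ‖g t‖) * (2 * r) + S := by
      calc ∫ x in Metric.closedBall t r, ‖g x - g t‖
          ≤ ∫ x in Metric.closedBall t r, ((1 + ‖g t‖) + ‖g x‖^2) := by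
            refine integral_mono (hInt0 r).norm
              ((integrableOn_const (isCompact_closedBall t r).measure_lt_top.ne).add
                hsq.integrableOn) fun x => ?_
            have := norm_sub_le (g x) (g t)
            simp only
            nlinarith [sq_nonneg (‖g x‖ - 1), sq_nonneg (‖g x‖)]
        _ = (1 + ‖g t‖) * (2 * r) + ∫ x in Metric.closedBall t r, ‖g x‖^2 := by
            have hc : IntegrableOn (fun _ : ℝ => 1 + ‖g t‖) (Metric.closedBall t r) :=
              integrableOn_const (isCompact_closedBall t r).measure_lt_top.ne
            rw [integral_add hc hsq.integrableOn, setIntegral_const, measureReal_def, Real.volume_closedBall,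
              ENNReal.toReal_ofReal (by positivity), smul_eq_mul, mul_comm]
        _ ≤ _ := by
            gcongr
            exact setIntegral_le_integral hsq (Eventually.of_forall fun _ => by positivity)
    rw [hA r hr] at hb
    have h2 : M r ≤ (1 + ‖g t‖) + S / (2 * r) := by
      rw [← sub_le_iff_le_add', le_div_iff₀ (by positivity)]
      linarith
    refine h2.trans ?_
    gcongr
  have hB0 : 0 ≤ B := (hM0 1 one_pos).trans (hB 1 one_pos)
  have hsum : Summable (fun k : ℕ => 8 * (1/2 : ℝ)^k * B) :=
    (summable_geometric_two.mul_left 8).mul_right B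
  have hlim : Tendsto (fun y : ℝ => ∑' k : ℕ, 8 * (1/2 : ℝ)^k * M (2^k * y))
      (nhdsWithin 0 (Ioi 0)) (nhds (∑' k : ℕ, (0:ℝ))) := by
    refine tendsto_tsum_of_dominated_convergence hsum (fun k => ?_) ?_
    · have : Tendsto (fun y : ℝ => 2^k * y) (nhdsWithin 0 (Ioi 0)) (nhdsWithin 0 (Ioi 0)) := by
        refine tendsto_nhdsWithin_iff.2 ⟨?_, ?_⟩
        · have : Tendsto (fun y : ℝ => 2^k * y) (nhds 0) (nhds (2^k * 0)) :=
            (continuous_const.mul continuous_id).tendsto 0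
          rw [mul_zero] at this
          exact this.mono_left nhdsWithin_le_nhds
        · filter_upwards [self_mem_nhdsWithin] with r hr
          have : 0 < r := hr
          show 0 < 2^k * r
          positivity
      simpa using (hM.comp this).const_mul (8 * (1/2 : ℝ)^k)
    · filter_upwards [self_mem_nhdsWithin] with y hy k
      have hy : 0 < y := hy
      have := hM0 (2^k * y) (by positivity)
      rw [Real.norm_of_nonneg (by positivity)]
      gcongr
      exact hB _ (by positivity)
  rw [tsum_zero] at hlim
  have hlim' := ENNReal.tendsto_ofReal hlim
  rw [ENNReal.ofReal_zero] at hlim'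
  refine tendsto_of_tendsto_of_tendsto_of_le_of_le' tendsto_const_nhds hlim'
    (Eventually.of_forall fun _ => zero_le) ?_
  filter_upwards [self_mem_nhdsWithin] with y hy
  have hy : 0 < y := hy
  refine (fht_poisson_le (fun x => ‖g x - g t‖ₑ)
    (hg.1.sub aestronglyMeasurable_const).enorm t y hy).trans ?_
  have hterm : ∀ k : ℕ, 0 ≤ 8 * (1/2 : ℝ)^k * M (2^k * y) := fun k => by
    have := hM0 (2^k * y) (by positivity)
    positivity
  rw [ENNReal.ofReal_tsum_of_nonneg hterm]
  · refine ENNReal.tsum_le_tsum fun k => le_of_eq ?_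
    have : ∫⁻ x in Metric.closedBall t (2^k * y), ‖g x - g t‖ₑ
        = ENNReal.ofReal (2 * (2^k * y) * M (2^k * y)) := by
      rw [← hA _ (by positivity), ofReal_integral_norm_eq_lintegral_enorm (hInt0 _)]
    rw [this, ← ENNReal.ofReal_mul (by positivity)]
    congr 1
    have h4 : (4:ℝ)^k = 2^k * 2^k := by rw [← mul_pow]; norm_num
    rw [h4, one_div, inv_pow]
    field_simp
    ring
  · refine hsum.of_nonneg_of_le hterm fun k => ?_
    gcongr
    exact hB _ (by positivity)

lemma fht_K_integral (t y : ℝ) (hy : 0 < y) :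
    Integrable (fun x : ℝ => y / ((x - t)^2 + y^2)) ∧ ∫ x : ℝ, y / ((x - t)^2 + y^2) = Real.pi := by
  have e : (fun x : ℝ => y / ((x - t)^2 + y^2))
      = fun x => y⁻¹ * (fun z => (fun w : ℝ => (1 + w^2)⁻¹) (z / y)) (x - t) := by
    funext x
    field_simp
    ring_nf
  rw [e]
  constructor
  · exact ((integrable_inv_one_add_sq.comp_div hy.ne').comp_sub_right t).const_mul _
  · rw [integral_const_mul, integral_sub_right_eq_self (fun z => (fun w : ℝ => (1 + w^2)⁻¹) (z / y)),
      Measure.integral_comp_div (fun w : ℝ => (1 + w^2)⁻¹) y, integral_univ_inv_one_add_sq,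
      abs_of_pos hy, smul_eq_mul]
    field_simp

lemma fht_kernel_lim (g : ℝ → ℂ) (hg : AEStronglyMeasurable g volume) (t : ℝ)
    (ht : Tendsto (fun y : ℝ => ∫⁻ x, ENNReal.ofReal (y / ((x - t)^2 + y^2)) * ‖g x - g t‖ₑ)
      (nhdsWithin 0 (Ioi 0)) (nhds 0))
    (k : ℝ → ℝ → ℝ) (hk : ∀ y, Measurable (k y))
    (hkb : ∀ y, 0 < y → ∀ x, |k y x| ≤ y / ((x - t)^2 + y^2))
    (c : ℝ) (hkc : ∀ y, 0 < y → ∫ x, k y x = c) :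
    Tendsto (fun y : ℝ => ∫ x, g x * (k y x : ℂ)) (nhdsWithin 0 (Ioi 0)) (nhds (g t * c)) := by
  have hfin : ∀ᶠ y : ℝ in nhdsWithin 0 (Ioi 0),
      ∫⁻ x, ENNReal.ofReal (y / ((x - t)^2 + y^2)) * ‖g x - g t‖ₑ < 1 :=
    ht.eventually_lt_const one_pos
  have hto := (ENNReal.tendsto_toReal ENNReal.zero_ne_top).comp ht
  rw [ENNReal.toReal_zero] at hto
  rw [tendsto_iff_norm_sub_tendsto_zero]
  refine squeeze_zero' (Eventually.of_forall fun _ => norm_nonneg _) ?_ hto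
  filter_upwards [hfin, self_mem_nhdsWithin] with y hy1 hy
  have hy : 0 < y := hy
  have hki : Integrable (k y) := (fht_K_integral t y hy).1.mono' (hk y).aestronglyMeasurable
    (Eventually.of_forall fun x => by simpa using hkb y hy x)
  have hle : ∫⁻ x, ‖(g x - g t) * (k y x : ℂ)‖ₑ
      ≤ ∫⁻ x, ENNReal.ofReal (y / ((x - t)^2 + y^2)) * ‖g x - g t‖ₑ := by
    refine lintegral_mono fun x => ?_
    rw [enorm_mul, mul_comm]
    gcongr
    rw [← ofReal_norm]
    refine ENNReal.ofReal_le_ofReal ?_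
    simpa using hkb y hy x
  have hI1 : Integrable (fun x => (g x - g t) * (k y x : ℂ)) := by
    refine ⟨(hg.sub aestronglyMeasurable_const).mul
      (Complex.continuous_ofReal.comp_aestronglyMeasurable hki.1), ?_⟩
    exact (hle.trans_lt hy1).trans ENNReal.one_lt_top
  have hI2 : Integrable (fun x => g t * (k y x : ℂ)) := hki.ofReal.const_mul _
  have : ∫ x, g x * (k y x : ℂ) = (∫ x, (g x - g t) * (k y x : ℂ)) + g t * c := by
    rw [← hkc y hy, ← integral_complex_ofReal, ← integral_const_mul, ← integral_add hI1 hI2]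
    congr 1
    funext x
    ring
  rw [this, add_sub_cancel_right]
  refine (norm_integral_le_lintegral_norm _).trans ?_
  refine ENNReal.toReal_mono (hy1.trans ENNReal.one_lt_top).ne ?_
  refine le_trans (le_of_eq ?_) hle
  simp only [ofReal_norm]

/-- truncated kernel -/
noncomputable def fhtKer (ε u : ℝ) : ℝ := {u : ℝ | ε < |u|}.indicator (fun u => 1 / u) u

lemma fhtKer_meas (ε : ℝ) : Measurable (fhtKer ε) := by
  unfold fhtKer
  exact (measurable_const.div measurable_id).indicator
    (measurableSet_lt measurable_const (measurable_id.abs))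

noncomputable def fhtD (ε u : ℝ) : ℝ := fhtKer ε u - u / (u^2 + ε^2)

lemma fhtD_meas (ε : ℝ) : Measurable (fhtD ε) := by
  unfold fhtD
  exact (fhtKer_meas ε).sub (by fun_prop)

lemma fhtD_bd (ε u : ℝ) (hε : 0 < ε) : |fhtD ε u| ≤ ε / (u^2 + ε^2) := by
  unfold fhtD fhtKer
  have hp : 0 < u^2 + ε^2 := by positivity
  by_cases hu : ε < |u|
  · rw [indicator_of_mem (show u ∈ {u : ℝ | ε < |u|} from hu)]
    have hu0 : u ≠ 0 := by
      rintro rfl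
      simp at hu
      linarith
    have hup : 0 < |u| := abs_pos.2 hu0
    have : 1 / u - u / (u^2 + ε^2) = ε^2 / (u * (u^2 + ε^2)) := by
      field_simp
      ring
    rw [this, abs_div, abs_mul, abs_of_pos hp, abs_of_pos (by positivity : 0 < ε^2),
      div_le_div_iff₀ (by positivity) hp]
    have : ε * ε ≤ ε * |u| := by gcongr
    nlinarith
  · rw [indicator_of_notMem (show u ∉ {u : ℝ | ε < |u|} from hu)]
    push Not at hu
    rw [zero_sub, abs_neg, abs_div, abs_of_pos hp]
    gcongr

lemma fhtD_int (ε t : ℝ) : ∫ x, fhtD ε (x - t) = 0 := by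
  rw [integral_sub_right_eq_self (fhtD ε)]
  have h : ∫ x, fhtD ε (-x) = ∫ x, fhtD ε x := integral_neg_eq_self _ _
  have h2 : ∀ x, fhtD ε (-x) = - fhtD ε x := by
    intro x
    unfold fhtD fhtKer
    by_cases hu : ε < |x|
    · rw [indicator_of_mem (show x ∈ {u : ℝ | ε < |u|} from hu),
        indicator_of_mem (show -x ∈ {u : ℝ | ε < |u|} by simpa using hu)]
      ring
    · rw [indicator_of_notMem (show x ∉ {u : ℝ | ε < |u|} from hu),
        indicator_of_notMem (show -x ∉ {u : ℝ | ε < |u|} by simpa using hu)]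
      ring
  simp_rw [h2, integral_neg] at h
  linarith

lemma fht_trunc (f : ℝ → ℂ) (t ε : ℝ) (ht : t ∈ Ioo (-1:ℝ) 1) (hε : 0 < ε)
    (hi : Integrable (fun x => (Ioo (-1:ℝ) 1).indicator f x * (fhtKer ε (x - t) : ℂ))) :
    (∫ x in Ioo (-1:ℝ) (t - ε), f x / ((x : ℂ) - (t : ℂ))) +
      ∫ x in Ioo (t + ε) (1:ℝ), f x / ((x : ℂ) - (t : ℂ)) =
    ∫ x, (Ioo (-1:ℝ) 1).indicator f x * (fhtKer ε (x - t) : ℂ) := by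
  have hS : ∀ x, x ∈ Ioo (-1:ℝ) (t - ε) ∪ Ioo (t + ε) 1 ↔ x ∈ Ioo (-1:ℝ) 1 ∧ ε < |x - t| := by
    intro x
    rcases ht with ⟨h1, h2⟩
    simp only [mem_union, mem_Ioo, lt_abs]
    constructor
    · rintro (⟨a, b⟩ | ⟨a, b⟩)
      · exact ⟨⟨a, by linarith⟩, Or.inr (by linarith)⟩
      · exact ⟨⟨by linarith, b⟩, Or.inl (by linarith)⟩
    · rintro ⟨⟨a, b⟩, (c | c)⟩
      · exact Or.inr ⟨by linarith, b⟩
      · exact Or.inl ⟨a, by linarith⟩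
  have hfun : (Ioo (-1:ℝ) (t - ε) ∪ Ioo (t + ε) 1).indicator
      (fun x => f x / ((x : ℂ) - (t : ℂ))) =
      fun x => (Ioo (-1:ℝ) 1).indicator f x * (fhtKer ε (x - t) : ℂ) := by
    funext x
    unfold fhtKer
    by_cases hx : x ∈ Ioo (-1:ℝ) (t - ε) ∪ Ioo (t + ε) 1
    · have hx' := (hS x).1 hx
      rw [indicator_of_mem hx, indicator_of_mem hx'.1,
        indicator_of_mem (show x - t ∈ {u : ℝ | ε < |u|} from hx'.2)]
      push_cast
      rw [mul_one_div]
    · rw [indicator_of_notMem hx]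
      by_cases h1 : x ∈ Ioo (-1:ℝ) 1
      · have h2 : x - t ∉ {u : ℝ | ε < |u|} := fun h => hx ((hS x).2 ⟨h1, h⟩)
        rw [indicator_of_notMem h2]
        simp
      · rw [indicator_of_notMem h1]
        simp
  have hm : MeasurableSet (Ioo (-1:ℝ) (t - ε) ∪ Ioo (t + ε) 1) :=
    measurableSet_Ioo.union measurableSet_Ioo
  have hInt0 : IntegrableOn (fun x => f x / ((x : ℂ) - (t : ℂ)))
      (Ioo (-1:ℝ) (t - ε) ∪ Ioo (t + ε) 1) := by
    rw [← integrable_indicator_iff hm, hfun]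
    exact hi
  rw [← setIntegral_union _ measurableSet_Ioo (hInt0.mono_set subset_union_left)
    (hInt0.mono_set subset_union_right), ← integral_indicator hm, hfun]
  rw [Set.disjoint_left]
  rintro x ⟨_, h⟩ ⟨h', _⟩
  linarith

lemma fht_limit (f : ℝ → ℂ) (hf : Integrable ((Ioo (-1:ℝ) 1).indicator f))
    (hm : MemLp ((Ioo (-1:ℝ) 1).indicator f) 2 volume) :
    ∀ᵐ t ∂volIoo, fht f t = Complex.I * f t - 2 * Complex.I * fhtN (hm.toLp _) t := by
  unfold volIoo
  rw [ae_restrict_iff' measurableSet_Ioo]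
  filter_upwards [fht_poisson _ hm, fht_poisson _ (Lp.memLp (fhtN (hm.toLp _)))] with t h1 h2 ht
  have hft : (Ioo (-1:ℝ) 1).indicator f t = f t := indicator_of_mem ht f
  set F := (Ioo (-1:ℝ) 1).indicator f with hF
  set g : Lp ℂ 2 (volume : Measure ℝ) := fhtN (hm.toLp F) with hg
  have hKm : ∀ y : ℝ, Measurable (fun x : ℝ => y / ((x - t)^2 + y^2)) := fun y => by fun_prop
  have hKabs : ∀ y, 0 < y → ∀ x, |y / ((x - t)^2 + y^2)| ≤ y / ((x - t)^2 + y^2) := by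
    intro y hy x
    rw [abs_of_nonneg (by positivity)]
  have L1 := fht_kernel_lim F hm.1 t h1 (fun y x => fhtD y (x - t))
    (fun y => (fhtD_meas y).comp (measurable_id.sub_const t))
    (fun y hy x => fhtD_bd y (x - t) hy) 0 (fun y _ => fhtD_int y t)
  have L2 := fht_kernel_lim F hm.1 t h1 (fun y x => y / ((x - t)^2 + y^2)) hKm hKabs
    Real.pi (fun y hy => (fht_K_integral t y hy).2)
  have L3 := fht_kernel_lim g (Lp.memLp g).1 t h2 (fun y x => y / ((x - t)^2 + y^2)) hKm hKabs
    Real.pi (fun y hy => (fht_K_integral t y hy).2)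
  have hpc : (Real.pi : ℂ) ≠ 0 := by exact_mod_cast Real.pi_ne_zero
  have LL := ((L1.const_mul (Real.pi : ℂ)⁻¹).add (L3.const_mul ((Real.pi : ℂ)⁻¹ * (-2 * Complex.I)))).add
    (L2.const_mul ((Real.pi : ℂ)⁻¹ * Complex.I))
  have hval : (Real.pi : ℂ)⁻¹ * (F t * ((0:ℝ):ℂ)) + (Real.pi : ℂ)⁻¹ * (-2 * Complex.I) * (g t * Real.pi)
      + (Real.pi : ℂ)⁻¹ * Complex.I * (F t * Real.pi) = Complex.I * f t - 2 * Complex.I * g t := by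
    rw [hft]
    field_simp
    simp
    ring
  rw [hval] at LL
  unfold fht
  refine Tendsto.limUnder_eq (LL.congr' ?_)
  filter_upwards [self_mem_nhdsWithin] with y hy
  have hy : 0 < y := hy
  have hbi : ∀ k : ℝ → ℂ, Measurable k → (∃ C : ℝ, ∀ x, ‖k x‖ ≤ C) →
      Integrable (fun x => F x * k x) := by
    rintro k hk ⟨C, hC⟩
    exact hf.mul_bdd (c := C) hk.aestronglyMeasurable (Eventually.of_forall hC)
  have hKb : ∀ u : ℝ, y / (u^2 + y^2) ≤ 1 / y := by
    intro u
    rw [div_le_div_iff₀ (by positivity) hy]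
    nlinarith [sq_nonneg u]
  have iD : Integrable (fun x => F x * (fhtD y (x - t) : ℂ)) := by
    refine hbi _ (Complex.measurable_ofReal.comp
      ((fhtD_meas y).comp (measurable_id.sub_const t))) ⟨1/y, fun x => ?_⟩
    simpa using (fhtD_bd y (x - t) hy).trans (hKb _)
  have iK : Integrable (fun x => F x * ((y / ((x - t)^2 + y^2) : ℝ) : ℂ)) := by
    refine hbi _ (Complex.measurable_ofReal.comp (hKm y)) ⟨1/y, fun x => ?_⟩
    rw [Complex.norm_real]
    exact (hKabs y hy x).trans (hKb _)
  have iC : Integrable (fun x => F x * (1 / (((x - t : ℝ):ℂ) + y * Complex.I))) := by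
    refine hbi _ (by fun_prop) ⟨1/y, fun x => ?_⟩
    rw [norm_div, norm_one]
    refine one_div_le_one_div_of_le hy ?_
    have := Complex.abs_im_le_norm (((x - t : ℝ):ℂ) + y * Complex.I)
    refine le_trans ?_ this
    simp [abs_of_pos hy]
  have split : ∀ x : ℝ, F x * (fhtKer y (x - t) : ℂ) = F x * (fhtD y (x - t) : ℂ)
      + F x * (1 / (((x - t : ℝ):ℂ) + y * Complex.I))
      + Complex.I * (F x * ((y / ((x - t)^2 + y^2) : ℝ) : ℂ)) := by
    intro x
    have e1 : (fhtKer y (x - t) : ℂ) = (fhtD y (x - t) : ℂ)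
        + (((x - t) / ((x - t)^2 + y^2) : ℝ) : ℂ) := by
      rw [← Complex.ofReal_add]
      congr 1
      unfold fhtD
      ring
    have e2 : (((x - t) / ((x - t)^2 + y^2) : ℝ) : ℂ) = 1 / (((x - t : ℝ):ℂ) + y * Complex.I)
        + Complex.I * ((y / ((x - t)^2 + y^2) : ℝ) : ℂ) := by
      generalize x - t = u
      have h1 := fht_ne u y hy.ne'
      have h2 := fht_ne u (-y) (by simpa using hy.ne')
      rw [Complex.ofReal_div, Complex.ofReal_div, Complex.ofReal_add, Complex.ofReal_pow,
        Complex.ofReal_pow, fht_fact]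
      have e : 1 / ((u:ℂ) + y * Complex.I) = ((u:ℂ) + (-y : ℝ) * Complex.I) /
          (((u:ℂ) + y * Complex.I) * ((u:ℂ) + (-y : ℝ) * Complex.I)) := by
        rw [div_eq_div_iff h1 (mul_ne_zero h1 h2)]
        ring
      rw [e, mul_div_assoc', ← add_div]
      congr 1
      push_cast
      ring
    rw [e1, e2]
    ring
  have hker : Integrable (fun x => F x * (fhtKer y (x - t) : ℂ)) := by
    simp_rw [split]
    exact (iD.add iC).add (iK.const_mul _)
  rw [fht_trunc f t y ht hy hker]
  simp_rw [← hF, split]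
  have s1 : ∫ x, (F x * (fhtD y (x - t) : ℂ)
      + F x * (1 / (((x - t : ℝ):ℂ) + y * Complex.I))
      + Complex.I * (F x * ((y / ((x - t)^2 + y^2) : ℝ) : ℂ)))
      = (∫ x, F x * (fhtD y (x - t) : ℂ))
      + (∫ x, F x * (1 / (((x - t : ℝ):ℂ) + y * Complex.I)))
      + Complex.I * ∫ x, (F x * ((y / ((x - t)^2 + y^2) : ℝ) : ℂ)) := by
    have iDC : Integrable (fun x => F x * (fhtD y (x - t) : ℂ)
      + F x * (1 / (((x - t : ℝ):ℂ) + y * Complex.I))) := iD.add iC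
    rw [integral_add iDC (iK.const_mul _), integral_add iD iC, integral_const_mul]
  rw [s1]
  have r := fhtN_repr (hm.toLp F) t y hy
  have r1 : ∫ x, fhtN (hm.toLp F) x * (((Real.pi)⁻¹ * (y / ((x - t)^2 + y^2)) : ℝ) : ℂ)
      = (Real.pi : ℂ)⁻¹ * ∫ x, g x * ((y / ((x - t)^2 + y^2) : ℝ) : ℂ) := by
    rw [← integral_const_mul]
    congr 1
    funext x
    rw [Complex.ofReal_mul, Complex.ofReal_inv]
    ring
  have r2 : ∫ x, (hm.toLp F) x * (Complex.I / (2 * Real.pi) * (1 / (((x - t : ℝ):ℂ) + y * Complex.I)))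
      = Complex.I / (2 * Real.pi) * ∫ x, F x * (1 / (((x - t : ℝ):ℂ) + y * Complex.I)) := by
    rw [← integral_const_mul]
    refine integral_congr_ae ?_
    filter_upwards [hm.coeFn_toLp] with x hx
    rw [hx]
    ring
  rw [r1, r2] at r
  have r3 : (Real.pi : ℂ)⁻¹ * (-2 * Complex.I) * ∫ x, g x * ((y / ((x - t)^2 + y^2) : ℝ) : ℂ)
      = (Real.pi : ℂ)⁻¹ * ∫ x, F x * (1 / (((x - t : ℝ):ℂ) + y * Complex.I)) := by
    generalize (∫ x, F x * (1 / (((x - t : ℝ):ℂ) + y * Complex.I))) = X at r ⊢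
    have : (Real.pi : ℂ)⁻¹ * X = (-2 * Complex.I) * (Complex.I / (2 * Real.pi) * X) := by
      field_simp
      simp
    rw [this, ← r]
    ring
  rw [r3]
  ring

lemma fhtBeta_le_one : fhtBeta ≤ 1 := by
  unfold fhtBeta
  refine Real.sqrt_le_iff.2 ⟨by norm_num, ?_⟩
  rw [one_pow]
  have hpi := Real.pi_gt_three
  have h2 := Real.integral_rpow_mul_exp_neg_mul_Ioi (a := 2) (r := Real.pi) (by norm_num) Real.pi_pos
  have hne : ∫ t in Ioi (0:ℝ), t ^ ((2:ℝ) - 1) * Real.exp (-(Real.pi * t)) ≠ 0 := by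
    rw [h2, Real.Gamma_two]
    positivity
  have hInt0 : Integrable (fun t : ℝ => t ^ ((2:ℝ) - 1) * Real.exp (-(Real.pi * t)))
      (volume.restrict (Ioi 0)) := by
    by_contra h
    exact hne (integral_undef h)
  calc ∫ l in Ioi (0:ℝ), 4 * l / (Real.exp (Real.pi * l) + 1)
      ≤ ∫ l in Ioi (0:ℝ), 4 * (l ^ ((2:ℝ) - 1) * Real.exp (-(Real.pi * l))) := by
        refine integral_mono_of_nonneg ?_ (hInt0.const_mul 4) ?_
        · filter_upwards [ae_restrict_mem measurableSet_Ioi] with l hl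
          have : 0 < l := hl
          simp only [Pi.zero_apply]
          positivity
        · filter_upwards [ae_restrict_mem measurableSet_Ioi] with l hl
          have : 0 < l := hl
          have e : l ^ ((2:ℝ) - 1) = l := by norm_num
          rw [e, Real.exp_neg, ← mul_assoc, ← div_eq_mul_inv]
          gcongr
          linarith
    _ = 4 * ((1 / Real.pi)^(2:ℝ) * 1) := by rw [integral_const_mul, h2, Real.Gamma_two]
    _ ≤ 1 := by
        rw [Real.rpow_two, mul_one, div_pow, one_pow, mul_one_div, div_le_one (by positivity)]
        nlinarith

lemma fht_tail (G : ℝ → ℂ) (hG : MemLp G 2 volume) :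
    Tendsto (fun n : ℕ => eLpNorm ((Ioi (n:ℝ)).indicator G) 2 volume) atTop (nhds 0) := by
  have e : ∀ n : ℕ, eLpNorm ((Ioi (n:ℝ)).indicator G) 2 volume
      = (∫⁻ x, ‖(Ioi (n:ℝ)).indicator G x‖ₑ ^ (2:ℝ)) ^ (1/(2:ℝ)) := by
    intro n
    rw [eLpNorm_eq_lintegral_rpow_enorm_toReal (by norm_num) (by norm_num)]
    simp
  simp_rw [e]
  have hfin : ∫⁻ x, ‖G x‖ₑ ^ (2:ℝ) ≠ ⊤ := by
    have := lintegral_rpow_enorm_lt_top_of_eLpNorm_lt_top (p := 2) (by norm_num) (by norm_num) hG.2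
    simpa using this.ne
  have key : Tendsto (fun n : ℕ => ∫⁻ x, ‖(Ioi (n:ℝ)).indicator G x‖ₑ ^ (2:ℝ)) atTop
      (nhds (∫⁻ x : ℝ, 0)) := by
    refine tendsto_lintegral_of_dominated_convergence' (fun x => ‖G x‖ₑ ^ (2:ℝ)) ?_ ?_ hfin ?_
    · intro n
      exact ((hG.1.indicator measurableSet_Ioi).enorm).pow_const _
    · intro n
      refine Eventually.of_forall fun x => ?_
      dsimp only
      gcongr
      by_cases hx : x ∈ Ioi (n:ℝ)
      · rw [indicator_of_mem hx]
      · rw [indicator_of_notMem hx]; simp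
    · refine Eventually.of_forall fun x => ?_
      refine tendsto_const_nhds.congr' ?_
      obtain ⟨N, hN⟩ := exists_nat_ge x
      filter_upwards [eventually_ge_atTop N] with n hn
      have : x ∉ Ioi (n:ℝ) := by
        have : (N:ℝ) ≤ n := by exact_mod_cast hn
        simp only [mem_Ioi, not_lt]
        linarith
      rw [indicator_of_notMem this]
      simp
  rw [lintegral_zero] at key
  have := (ENNReal.continuous_rpow_const (y := 1/(2:ℝ))).tendsto 0 |>.comp key
  simpa [Function.comp_def] using this

noncomputable def fhtMod (n : ℕ) (x : ℝ) : ℂ := Complex.exp ((2 * Real.pi * (x * n) : ℝ) * Complex.I)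

lemma fhtMod_norm (n : ℕ) (x : ℝ) : ‖fhtMod n x‖ = 1 := Complex.norm_exp_ofReal_mul_I _

lemma fhtMod_meas (n : ℕ) : Measurable (fhtMod n) := by
  unfold fhtMod
  fun_prop

lemma fhtMod_fourierInv (n : ℕ) (f : ℝ → ℂ) (w : ℝ) :
    𝓕⁻ (fun x => fhtMod n x * f x) w = 𝓕⁻ f (w + n) := by
  rw [Real.fourierInv_eq', Real.fourierInv_eq']
  congr 1
  funext v
  unfold fhtMod
  rw [smul_eq_mul, smul_eq_mul, ← mul_assoc, ← Complex.exp_add]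
  congr 2
  simp
  ring

lemma fhtN_eLpNorm (n : ℕ) (Φ : ℝ → ℂ) (hi : Integrable Φ) (h2 : MemLp Φ 2 volume)
    (hi' : Integrable (fun x => fhtMod n x * Φ x))
    (h2' : MemLp (fun x => fhtMod n x * Φ x) 2 volume) :
    eLpNorm (fhtN (h2'.toLp _)) 2 volume
      = eLpNorm ((Ioi (n:ℝ)).indicator (𝓕⁻ (h2.toLp Φ) : Lp ℂ 2 (volume : Measure ℝ))) 2 volume := by
  have e1 : eLpNorm (fhtN (h2'.toLp _)) 2 volume
      = eLpNorm (fhtCut (𝓕⁻ (h2'.toLp _))) 2 volume := by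
    rw [← Lp.enorm_def, ← Lp.enorm_def, ← ofReal_norm, ← ofReal_norm]
    congr 1
    exact Lp.norm_fourier_eq _
  rw [e1, eLpNorm_congr_ae (fhtCut_coe _)]
  have a1 := fht_fourierInv_coe _ hi' h2'
  have a2 := fht_fourierInv_coe _ hi h2
  have b1 : eLpNorm ((Ioi (0:ℝ)).indicator (𝓕⁻ (h2'.toLp _) : Lp ℂ 2 (volume : Measure ℝ))) 2 volume
      = eLpNorm (((Ioi (n:ℝ)).indicator (𝓕⁻ Φ)) ∘ (fun x => x + (n:ℝ))) 2 volume := by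
    apply eLpNorm_congr_ae
    filter_upwards [a1] with x hx
    simp only [Function.comp, indicator, hx, mem_Ioi, fhtMod_fourierInv]
    simp
  have b2 : eLpNorm ((Ioi (n:ℝ)).indicator (𝓕⁻ (h2.toLp Φ) : Lp ℂ 2 (volume : Measure ℝ))) 2 volume
      = eLpNorm ((Ioi (n:ℝ)).indicator (𝓕⁻ Φ)) 2 volume := by
    apply eLpNorm_congr_ae
    filter_upwards [a2] with x hx
    by_cases h : x ∈ Ioi (n:ℝ)
    · rw [indicator_of_mem h, indicator_of_mem h, hx]
    · rw [indicator_of_notMem h, indicator_of_notMem h]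
  have hcont : Continuous (𝓕⁻ Φ) := by
    rw [Real.fourierInv_eq_fourier_comp_neg]
    exact VectorFourier.fourierIntegral_continuous Real.continuous_fourierChar
      continuous_inner hi.comp_neg
  rw [b1, b2]
  exact eLpNorm_comp_measurePreserving
    (hcont.aestronglyMeasurable.indicator measurableSet_Ioi)
    (measurePreserving_add_right volume (n:ℝ))

lemma fht_main (φ : MeasureTheory.SimpleFunc ℝ ℂ) :
    eLpNorm (fun x => φ x) 2 volIoo
      ≤ ⨆ θ : {θ : ℝ → ℂ // Measurable θ ∧ ∀ᵐ x ∂volIoo, ‖θ x‖ = 1},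
          eLpNorm (fht fun x => θ.1 x * φ x) 2 volIoo := by
  set S := ⨆ θ : {θ : ℝ → ℂ // Measurable θ ∧ ∀ᵐ x ∂volIoo, ‖θ x‖ = 1},
          eLpNorm (fht fun x => θ.1 x * φ x) 2 volIoo with hS
  obtain ⟨C, hC⟩ := φ.exists_forall_norm_le
  have hC0 : 0 ≤ C := (norm_nonneg _).trans (hC 0)
  have gen : ∀ f : ℝ → ℂ, Measurable f → (∀ x, ‖f x‖ ≤ C) →
      Integrable ((Ioo (-1:ℝ) 1).indicator f) ∧ MemLp ((Ioo (-1:ℝ) 1).indicator f) 2 volume := by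
    intro f hf hfb
    have hi : Integrable ((Ioo (-1:ℝ) 1).indicator f) := by
      rw [integrable_indicator_iff measurableSet_Ioo]
      refine Measure.integrableOn_of_bounded (M := C) ?_ hf.aestronglyMeasurable
        (Eventually.of_forall hfb)
      simp
    refine ⟨hi, fht_memLp_two_of_bdd (C := C) hi fun x => ?_⟩
    exact (norm_indicator_le_norm_self f x).trans (hfb x)
  obtain ⟨hi, h2⟩ := gen φ φ.measurable hC
  have hlim := fht_tail _ (Lp.memLp (𝓕⁻ (h2.toLp _) : Lp ℂ 2 (volume : Measure ℝ)))
  have hlim2 := ((ENNReal.Tendsto.const_mul hlim (Or.inr (by norm_num : (2:ENNReal) ≠ ⊤))).const_add S)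
  rw [mul_zero, add_zero] at hlim2
  refine ge_of_tendsto' hlim2 fun n => ?_
  have hbn : ∀ x, ‖fhtMod n x * φ x‖ ≤ C := fun x => by
    rw [norm_mul, fhtMod_norm, one_mul]; exact hC x
  obtain ⟨hi1, h21⟩ := gen (fun x => fhtMod n x * φ x) ((fhtMod_meas n).mul φ.measurable) hbn
  have hlimit := fht_limit (fun x => fhtMod n x * φ x) hi1 h21
  have hfe : (Ioo (-1:ℝ) 1).indicator (fun x => fhtMod n x * φ x)
      = fun x => fhtMod n x * (Ioo (-1:ℝ) 1).indicator φ x := by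
    funext x
    by_cases hx : x ∈ Ioo (-1:ℝ) 1
    · rw [indicator_of_mem hx, indicator_of_mem hx]
    · rw [indicator_of_notMem hx, indicator_of_notMem hx, mul_zero]
  have hN : eLpNorm (fhtN (h21.toLp _)) 2 volume
      = eLpNorm ((Ioi (n:ℝ)).indicator (𝓕⁻ (h2.toLp _) : Lp ℂ 2 (volume : Measure ℝ))) 2 volume := by
    have h21' := h21
    have hi1' := hi1
    rw [hfe] at h21' hi1'
    rw [← fhtN_eLpNorm n _ hi h2 hi1' h21']
    congr 3
    exact congrArg fhtN (MemLp.toLp_congr _ _ (Eventually.of_forall fun x => congrFun hfe x))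
  rw [← hN]
  set g := fhtN (h21.toLp _) with hg
  have hgm : AEStronglyMeasurable g volIoo := (Lp.aestronglyMeasurable g).restrict
  have hfm : AEStronglyMeasurable (fun x => fhtMod n x * φ x) volIoo :=
    ((fhtMod_meas n).mul φ.measurable).aestronglyMeasurable
  have hTm : AEStronglyMeasurable (fht fun x => fhtMod n x * φ x) volIoo := by
    refine AEStronglyMeasurable.congr ?_ (EventuallyEq.symm hlimit)
    exact (hfm.const_mul _).sub (hgm.const_mul _)
  calc eLpNorm (fun x => φ x) 2 volIoo
      = eLpNorm ((fht fun x => fhtMod n x * φ x) + (2 * Complex.I) • (g : ℝ → ℂ)) 2 volIoo := by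
        apply eLpNorm_congr_norm_ae
        filter_upwards [hlimit] with x hx
        rw [Pi.add_apply, hx, Pi.smul_apply, smul_eq_mul, sub_add_cancel, norm_mul, norm_mul,
          fhtMod_norm, Complex.norm_I, one_mul, one_mul]
    _ ≤ eLpNorm (fht fun x => fhtMod n x * φ x) 2 volIoo
        + eLpNorm ((2 * Complex.I) • (g : ℝ → ℂ)) 2 volIoo :=
        eLpNorm_add_le hTm (hgm.const_smul _) (by norm_num)
    _ ≤ S + 2 * eLpNorm g 2 volume := by
        gcongr
        · exact le_iSup (fun θ : {θ : ℝ → ℂ // Measurable θ ∧ ∀ᵐ x ∂volIoo, ‖θ x‖ = 1} =>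
            eLpNorm (fht fun x => θ.1 x * φ x) 2 volIoo)
            ⟨fhtMod n, fhtMod_meas n, Eventually.of_forall (fhtMod_norm n)⟩
        · rw [eLpNorm_const_smul]
          have : ‖(2 * Complex.I : ℂ)‖ₑ = 2 := by
            rw [← ofReal_norm]
            simp
          rw [this]
          gcongr
          exact Measure.restrict_le_self

/-- Theorem 5.2: `β‖φ‖_{L²} ≤ sup_{|θ|=1} ‖T(θφ)‖_{L²}` for every
`ℂ`-valued Borel simple function `φ` on `(−1,1)`. -/
theorem stmt18 (φ : MeasureTheory.SimpleFunc ℝ ℂ) :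
    ENNReal.ofReal fhtBeta * eLpNorm (fun x => φ x) 2 volIoo
      ≤ ⨆ θ : {θ : ℝ → ℂ // Measurable θ ∧ ∀ᵐ x ∂volIoo, ‖θ x‖ = 1},
          eLpNorm (fht fun x => θ.1 x * φ x) 2 volIoo := by
  calc ENNReal.ofReal fhtBeta * eLpNorm (fun x => φ x) 2 volIoo
      ≤ 1 * eLpNorm (fun x => φ x) 2 volIoo := by
        gcongr
        exact ENNReal.ofReal_le_one.2 fhtBeta_le_one
    _ ≤ _ := by
        rw [one_mul]
        exact fht_main φ
end
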